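/- arXiv:1912.00140 — 3 statements merged into one kernel-verified Lean document; each statement's English description precedes it below -/
import Mathlib

section
/- ∑_{n=1}^∞ C(2n,n) / (4ⁿ · n⁶) = (79/15120)·π⁶ - 12·ζ(5)·log 2 + (1/20)·π⁴·log²2 - 2·ζ(3)² + (2/3)·ζ(3)·π²·log 2 - (8/3)·ζ(3)·log³2 + (1/9)·π²·log⁴2 - (4/45)·log⁶2. -/
/-!
With `aₙ = C(2n, n) / 4ⁿ`, expanding `t / (n - t)` in powers of `t` shows that
`G(-t) = 1 - ∑_{k ≥ 1} Sₖ tᵏ`, where `Sₖ = ∑_{n ≥ 1} aₙ / nᵏ` and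
`G(s) = 1 + ∑_{n ≥ 1} aₙ s / (n + s)` is the partial fraction expansion of `s B(s, 1/2)`.
A telescoping sum gives `(s + 1) G(s) = (s + 1/2) G(s + 1)`, and iterating it yields the product
`G(s) = ∏_{m ≥ 0} (1 + s / (m + 1/2)) / (1 + s / (m + 1))`, hence
`G(-t) = exp (-∑_{k ≥ 1} Pₖ tᵏ / k)` with `Pₖ = ∑_{m ≥ 0} ((m + 1/2)⁻ᵏ - (m + 1)⁻ᵏ)`.
Comparing the two expansions, the `Sₖ` and `Pₖ` obey Newton's identities. Finally
`P₁ = 2 log 2` and `Pₖ = (2ᵏ - 2) ζ(k)` for `k ≥ 2`, so `S₆` is a polynomial in these values.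
-/

open Filter Topology

section Series

theorem hasSum_tsum_of_norm_le_mul {ι κ E : Type*} [NormedAddCommGroup E] [CompleteSpace E]
    {F : ι → κ → E} {f : ι → E} {u : ι → ℝ} {v : κ → ℝ} (hu : Summable u) (hv : Summable v)
    (hF : ∀ i j, ‖F i j‖ ≤ u i * v j) (hf : ∀ i, HasSum (F i) (f i)) :
    HasSum (fun j => ∑' i, F i j) (∑' i, f i) := by
  have hF' : Summable fun x : ι × κ => F x.1 x.2 :=
    .of_norm_bounded (summable_mul_of_summable_norm hu.norm hv.norm) fun x => hF x.1 x.2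
  rw [(hF'.hasSum.prod_fiberwise hf).tsum_eq, ← (Equiv.prodComm κ ι).tsum_eq]
  exact hF'.prod_symm.hasSum.prod_fiberwise fun j => (hF'.prod_symm.prod_factor j).hasSum

variable {𝕜 : Type*} [NontriviallyNormedField 𝕜] {f g : 𝕜 → 𝕜} {a b : ℕ → 𝕜}

theorem hasFPowerSeriesAt_ofScalars_of_hasSum
    (hf : ∀ᶠ z in 𝓝 0, HasSum (fun n => a n * z ^ n) (f z)) :
    HasFPowerSeriesAt f (.ofScalars 𝕜 a) 0 := by
  rw [hasFPowerSeriesAt_iff]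
  filter_upwards [hf] with z hz
  simpa only [zero_add, FormalMultilinearSeries.coeff_ofScalars, smul_eq_mul, mul_comm] using hz

variable [CompleteSpace 𝕜] [CharZero 𝕜]

theorem iteratedDeriv_zero_eq_of_hasSum
    (hf : ∀ᶠ z in 𝓝 0, HasSum (fun n => a n * z ^ n) (f z)) (n : ℕ) :
    iteratedDeriv n f 0 = n.factorial * a n := by
  have hfa := hasFPowerSeriesAt_ofScalars_of_hasSum hf
  have hcoeff := congrArg (·.coeff n)
    (hfa.analyticAt.hasFPowerSeriesAt.eq_formalMultilinearSeries hfa)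
  simp only [FormalMultilinearSeries.coeff_ofScalars] at hcoeff
  rwa [div_eq_iff (mod_cast n.factorial_ne_zero), mul_comm] at hcoeff

theorem succ_mul_coeff_succ_of_deriv_eq_deriv_mul
    (hf : ∀ᶠ z in 𝓝 0, HasSum (fun n => a n * z ^ n) (f z))
    (hg : ∀ᶠ z in 𝓝 0, HasSum (fun n => b n * z ^ n) (g z))
    (h : deriv f =ᶠ[𝓝 0] fun z => deriv g z * f z) (n : ℕ) :
    (n + 1) * a (n + 1) = ∑ i ∈ Finset.range (n + 1), (i + 1) * b (i + 1) * a (n - i) := by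
  have hfa := (hasFPowerSeriesAt_ofScalars_of_hasSum hf).analyticAt
  have hga := (hasFPowerSeriesAt_ofScalars_of_hasSum hg).analyticAt
  have leibniz : iteratedDeriv (n + 1) f 0 = ∑ i ∈ Finset.range (n + 1),
      n.choose i * iteratedDeriv (i + 1) g 0 * iteratedDeriv (n - i) f 0 := by
    rw [iteratedDeriv_succ', h.iteratedDeriv_eq,
      iteratedDeriv_fun_mul hga.deriv.contDiffAt hfa.contDiffAt]
    simp only [iteratedDeriv_succ']
  simp only [iteratedDeriv_zero_eq_of_hasSum hf, iteratedDeriv_zero_eq_of_hasSum hg] at leibniz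
  have hn : (n.factorial : 𝕜) ≠ 0 := mod_cast n.factorial_ne_zero
  apply mul_left_cancel₀ hn
  calc (n.factorial : 𝕜) * ((n + 1) * a (n + 1))
      = (n + 1).factorial * a (n + 1) := by rw [Nat.factorial_succ]; push_cast; ring
    _ = _ := by
      rw [leibniz, Finset.mul_sum]
      refine Finset.sum_congr rfl fun i hi => ?_
      rw [← Nat.choose_mul_factorial_mul_factorial (Finset.mem_range_succ_iff.1 hi),
        Nat.factorial_succ]
      push_cast
      ring

end Series

theorem deriv_eventuallyEq_of_frequently_eq_exp {f g : ℝ → ℝ} {x : ℝ} (hf : AnalyticAt ℝ f x)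
    (hg : AnalyticAt ℝ g x) (h : ∃ᶠ t in 𝓝[≠] x, f t = Real.exp (g t)) :
    deriv f =ᶠ[𝓝 x] fun t => deriv g t * f t := by
  have hexp : ∀ᶠ t in 𝓝 x, f t = Real.exp (g t) :=
    (hf.frequently_eq_iff_eventually_eq hg.rexp).1 h
  filter_upwards [hexp.eventually_nhds, hg.eventually_analyticAt] with t ht hgt
  rw [EventuallyEq.deriv_eq ht, deriv_exp hgt.differentiableAt, ht.self_of_nhds, mul_comm]

theorem newton_identity_of_one_sub_eq_exp_neg {s p : ℕ → ℝ} {S P : ℝ → ℝ}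
    (hS : ∀ᶠ t in 𝓝 0, HasSum (fun k => s (k + 1) * t ^ (k + 1)) (S t))
    (hP : ∀ᶠ t in 𝓝 0, HasSum (fun k => p (k + 1) / (k + 1) * t ^ (k + 1)) (P t))
    (h : ∃ᶠ t in 𝓝[≠] 0, 1 - S t = Real.exp (-P t)) (n : ℕ) :
    (n + 1) * s (n + 1) = p (n + 1) - ∑ i ∈ Finset.range n, p (i + 1) * s (n - i) := by
  let a : ℕ → ℝ := fun k => if k = 0 then 1 else -s k
  have ha {k : ℕ} (hk : k ≠ 0) : a k = -s k := if_neg hk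
  have hf : ∀ᶠ t in 𝓝 0, HasSum (fun k => a k * t ^ k) (1 - S t) := by
    filter_upwards [hS] with t ht
    refine (hasSum_nat_add_iff' 1).1 ?_
    simpa [a] using ht.neg
  have hg : ∀ᶠ t in 𝓝 0, HasSum (fun k : ℕ => -p k / k * t ^ k) (-P t) := by
    filter_upwards [hP] with t ht
    refine (hasSum_nat_add_iff' 1).1 ?_
    simpa [neg_div] using ht.neg
  have hrec := succ_mul_coeff_succ_of_deriv_eq_deriv_mul hf hg
    (deriv_eventuallyEq_of_frequently_eq_exp
      (hasFPowerSeriesAt_ofScalars_of_hasSum hf).analyticAt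
      (hasFPowerSeriesAt_ofScalars_of_hasSum hg).analyticAt h) n
  have hterm : ∀ i ∈ Finset.range n,
      ((i : ℝ) + 1) * (-p (i + 1) / (i + 1 : ℕ)) * a (n - i) = p (i + 1) * s (n - i) := by
    intro i hi
    rw [ha (Nat.sub_ne_zero_of_lt (Finset.mem_range.1 hi))]
    push_cast
    field_simp
  have hlast : ((n : ℝ) + 1) * (-p (n + 1) / (n + 1 : ℕ)) * a (n - n) = -p (n + 1) := by
    simp only [a, Nat.sub_self, if_true]
    push_cast
    field_simp
  rw [Finset.sum_range_succ, Finset.sum_congr rfl hterm, hlast, ha n.succ_ne_zero] at hrec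
  linarith

/-- The central binomial coefficient `C(2n, n)` normalised to `C(2n, n) / 4ⁿ`, the weights of the
series studied here. -/
noncomputable def centralBinomRatio (n : ℕ) : ℝ := n.centralBinom / 4 ^ n

theorem centralBinomRatio_zero : centralBinomRatio 0 = 1 := by simp [centralBinomRatio]

theorem centralBinomRatio_pos (n : ℕ) : 0 < centralBinomRatio n :=
  div_pos (mod_cast n.centralBinom_pos) (by positivity)

theorem centralBinomRatio_succ (n : ℕ) :
    centralBinomRatio (n + 1) = centralBinomRatio n * ((n + 1 / 2) / (n + 1)) := by
  have h : ((n : ℝ) + 1) * (n + 1).centralBinom = 2 * (2 * n + 1) * n.centralBinom :=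
    mod_cast n.succ_mul_centralBinom_succ
  unfold centralBinomRatio
  field_simp
  linear_combination 2 * 4 ^ n * h

theorem centralBinomRatio_sub_succ (n : ℕ) :
    centralBinomRatio n - centralBinomRatio (n + 1) = centralBinomRatio n / (2 * (n + 1)) := by
  rw [centralBinomRatio_succ]
  field_simp
  ring

theorem centralBinomRatio_antitone : Antitone centralBinomRatio :=
  antitone_nat_of_succ_le fun n => by
    rw [← sub_nonneg, centralBinomRatio_sub_succ]
    have := centralBinomRatio_pos n
    positivity

theorem centralBinomRatio_sq (n : ℕ) :
    centralBinomRatio n ^ 2 = (Real.Wallis.W n)⁻¹ * (2 * n + 1 : ℝ)⁻¹ := by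
  have h : (n.centralBinom : ℝ) * n.factorial ^ 2 = (2 * n).factorial := by
    have := Nat.choose_mul_factorial_mul_factorial (show n ≤ 2 * n by lia)
    rw [show 2 * n - n = n by lia, mul_assoc, ← sq] at this
    exact mod_cast this
  rw [Real.Wallis.W_eq_factorial_ratio, ← h, centralBinomRatio, pow_mul]
  have := n.factorial_pos
  have := n.centralBinom_pos
  have h4 : ((2 : ℝ) ^ 4) ^ n = (4 ^ n) ^ 2 := by rw [pow_right_comm 4 n 2]; norm_num
  rw [h4]
  field_simp

theorem tendsto_centralBinomRatio : Tendsto centralBinomRatio atTop (𝓝 0) := by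
  have hodd : Tendsto (fun n : ℕ => (2 * n + 1 : ℝ)⁻¹) atTop (𝓝 0) := by
    refine Tendsto.inv_tendsto_atTop (tendsto_atTop_add_const_right _ _ ?_)
    exact tendsto_natCast_atTop_atTop.const_mul_atTop two_pos
  have hsq := (Real.Wallis.tendsto_W_nhds_pi_div_two.inv₀ (by positivity)).mul hodd
  simpa only [← centralBinomRatio_sq, mul_zero, Real.sqrt_zero,
    Real.sqrt_sq (centralBinomRatio_pos _).le] using hsq.sqrt

theorem hasSum_centralBinomRatio_sub_succ :
    HasSum (fun n => centralBinomRatio n - centralBinomRatio (n + 1)) 1 := by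
  rw [hasSum_iff_tendsto_nat_of_nonneg
    fun n => sub_nonneg.2 (centralBinomRatio_antitone n.le_succ)]
  simpa only [Finset.sum_range_sub', centralBinomRatio_zero, sub_zero]
    using tendsto_centralBinomRatio.const_sub 1

theorem summable_centralBinomRatio_succ_div :
    Summable fun n : ℕ => centralBinomRatio (n + 1) / (n + 1) := by
  refine .of_nonneg_of_le (fun n => ?_) (fun n => ?_)
    (hasSum_centralBinomRatio_sub_succ.summable.mul_left 2)
  · exact div_nonneg (centralBinomRatio_pos _).le (by positivity)
  · calc centralBinomRatio (n + 1) / (n + 1) ≤ centralBinomRatio n / (n + 1) := by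
          gcongr; exact centralBinomRatio_antitone n.le_succ
      _ = 2 * (centralBinomRatio n - centralBinomRatio (n + 1)) := by
          rw [centralBinomRatio_sub_succ]; field_simp

section BetaRatio

/-- The function `s B(s, 1/2) = √π Γ(s + 1) / Γ(s + 1/2)`, with value `1` at `0`, encoded by its
partial fraction expansion. It serves as the generating function of `centralBinomSum`. -/
noncomputable def betaRatio (s : ℝ) : ℝ :=
  1 + ∑' n : ℕ, centralBinomRatio (n + 1) * s / (n + 1 + s)

variable {s t : ℝ}

theorem betaRatio_zero : betaRatio 0 = 1 := by simp [betaRatio]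

theorem hasSum_betaRatio (hs : 0 ≤ s) :
    HasSum (fun n : ℕ => centralBinomRatio (n + 1) * s / (n + 1 + s)) (betaRatio s - 1) := by
  rw [betaRatio, add_sub_cancel_left]
  refine (Summable.of_nonneg_of_le (fun n => ?_) (fun n => ?_)
    (summable_centralBinomRatio_succ_div.mul_right s)).hasSum
  all_goals have := centralBinomRatio_pos (n + 1)
  · positivity
  · rw [div_mul_eq_mul_div]
    exact div_le_div_of_nonneg_left (by positivity) (by positivity) (by linarith)

theorem betaRatio_mono (hs : 0 ≤ s) (hst : s ≤ t) : betaRatio s ≤ betaRatio t := by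
  refine sub_le_sub_iff_right 1 |>.1 <|
    hasSum_le (fun n => ?_) (hasSum_betaRatio hs) (hasSum_betaRatio (hs.trans hst))
  have ha := centralBinomRatio_pos (n + 1)
  have hmul : 0 ≤ centralBinomRatio (n + 1) * (n + 1) := by positivity
  rw [div_le_div_iff₀ (by positivity) (by linarith)]
  linarith [mul_le_mul_of_nonneg_left hst hmul]

theorem one_le_betaRatio (hs : 0 ≤ s) : 1 ≤ betaRatio s :=
  betaRatio_zero ▸ betaRatio_mono le_rfl hs

theorem mul_betaRatio_le_mul_betaRatio (hs : 0 ≤ s) (hst : s ≤ t) :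
    s * betaRatio t ≤ t * betaRatio s := by
  have hle : s * (betaRatio t - 1) ≤ t * (betaRatio s - 1) := by
    refine hasSum_le (fun n => ?_) ((hasSum_betaRatio (hs.trans hst)).mul_left s)
      ((hasSum_betaRatio hs).mul_left t)
    have ha := centralBinomRatio_pos (n + 1)
    have ht := hs.trans hst
    calc s * (centralBinomRatio (n + 1) * t / (n + 1 + t))
        = centralBinomRatio (n + 1) * s * t / (n + 1 + t) := by ring
      _ ≤ centralBinomRatio (n + 1) * s * t / (n + 1 + s) := by gcongr
      _ = t * (centralBinomRatio (n + 1) * s / (n + 1 + s)) := by ring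
  linarith

theorem hasSum_betaRatio_add_one (hs : 0 ≤ s) :
    HasSum (fun n : ℕ => centralBinomRatio n * (s + 1) / (n + 1 + s)) (betaRatio (s + 1)) := by
  refine (hasSum_nat_add_iff' 1).1 ?_
  have hzero : centralBinomRatio 0 * (s + 1) / ((0 : ℕ) + 1 + s) = 1 := by
    rw [centralBinomRatio_zero, Nat.cast_zero]
    field_simp
    ring
  rw [Finset.sum_range_one, hzero]
  convert! hasSum_betaRatio (by positivity : 0 ≤ s + 1) using 3 with n
  push_cast
  ring

theorem betaRatio_mul_add_one (hs : 0 ≤ s) :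
    betaRatio s * (s + 1) = betaRatio (s + 1) * (s + 1 / 2) := by
  have hdiff := ((hasSum_betaRatio_add_one hs).mul_right (s + 1 / 2)).sub
    ((hasSum_betaRatio hs).mul_right (s + 1))
  have htelescope : HasSum (fun n : ℕ => centralBinomRatio n * (s + 1) / (n + 1 + s) * (s + 1 / 2)
      - centralBinomRatio (n + 1) * s / (n + 1 + s) * (s + 1)) (1 * (s + 1)) := by
    refine (hasSum_centralBinomRatio_sub_succ.mul_right (s + 1)).congr_fun fun n => ?_
    rw [centralBinomRatio_succ]
    field_simp
    ring
  linarith [hdiff.unique htelescope]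

theorem log_betaRatio_sub_log_betaRatio_add_one (hs : 0 ≤ s) :
    Real.log (betaRatio s) - Real.log (betaRatio (s + 1)) =
      Real.log (s + 1 / 2) - Real.log (s + 1) := by
  have h₀ := one_le_betaRatio hs
  have h₁ := one_le_betaRatio (by positivity : 0 ≤ s + 1)
  have hlog := congrArg Real.log (betaRatio_mul_add_one hs)
  rw [Real.log_mul (by positivity) (by positivity),
    Real.log_mul (by positivity) (by positivity)] at hlog
  linarith

theorem sum_range_log_one_add_div (hs : 0 ≤ s) (N : ℕ) :
    ∑ m ∈ Finset.range N, (Real.log (1 + s / (m + 1 / 2)) - Real.log (1 + s / (m + 1))) =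
      Real.log (betaRatio s) - (Real.log (betaRatio (N + s)) - Real.log (betaRatio N)) := by
  induction N with
  | zero => simp [betaRatio_zero]
  | succ N ih =>
    have hN := log_betaRatio_sub_log_betaRatio_add_one N.cast_nonneg
    have hNs := log_betaRatio_sub_log_betaRatio_add_one (by positivity : 0 ≤ N + s)
    have hhalf : 1 + s / ((N : ℝ) + 1 / 2) = (N + s + 1 / 2) / (N + 1 / 2) := by field_simp; ring
    have hone : 1 + s / ((N : ℝ) + 1) = (N + s + 1) / (N + 1) := by field_simp; ring
    rw [Finset.sum_range_succ, ih, hhalf, hone, Real.log_div (by positivity) (by positivity),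
      Real.log_div (by positivity) (by positivity), Nat.cast_succ,
      add_right_comm (N : ℝ) 1 s]
    linarith

theorem tendsto_log_betaRatio_add_sub (hs : 0 ≤ s) :
    Tendsto (fun N : ℕ => Real.log (betaRatio (N + s)) - Real.log (betaRatio N)) atTop (𝓝 0) := by
  have hpos (N : ℕ) : 0 < betaRatio N := zero_lt_one.trans_le (one_le_betaRatio N.cast_nonneg)
  have hmono (N : ℕ) : betaRatio N ≤ betaRatio (N + s) :=
    betaRatio_mono N.cast_nonneg (by linarith)
  refine squeeze_zero' (g := fun N : ℕ => s / N) (.of_forall fun N => ?_) ?_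
    (tendsto_const_div_atTop_nhds_zero_nat s)
  · exact sub_nonneg.2 (Real.log_le_log (hpos N) (hmono N))
  · filter_upwards [eventually_gt_atTop 0] with N hN
    have hN : (0 : ℝ) < N := mod_cast hN
    have := hpos N
    calc Real.log (betaRatio (N + s)) - Real.log (betaRatio N)
        = Real.log (betaRatio (N + s) / betaRatio N) :=
          (Real.log_div ((hpos N).trans_le (hmono N)).ne' (hpos N).ne').symm
      _ ≤ betaRatio (N + s) / betaRatio N - 1 :=
          Real.log_le_sub_one_of_pos (div_pos ((hpos N).trans_le (hmono N)) (hpos N))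
      _ ≤ (N + s) / N - 1 := by
          gcongr ?_ - 1
          rw [div_le_div_iff₀ (hpos N) hN]
          linarith [mul_betaRatio_le_mul_betaRatio hN.le (by linarith : (N : ℝ) ≤ N + s)]
      _ = s / N := by field_simp; ring

theorem hasSum_log_betaRatio (hs : 0 ≤ s) :
    HasSum (fun m : ℕ => Real.log (1 + s / (m + 1 / 2)) - Real.log (1 + s / (m + 1)))
      (Real.log (betaRatio s)) := by
  rw [hasSum_iff_tendsto_nat_of_nonneg]
  · simpa only [sum_range_log_one_add_div hs, sub_zero]
      using (tendsto_log_betaRatio_add_sub hs).const_sub (Real.log (betaRatio s))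
  · intro m
    rw [sub_nonneg]
    gcongr
    norm_num

end BetaRatio

/-- The series `∑_{n ≥ 1} C(2n, n) / (4ⁿ nᵏ)`, with the summation index shifted to start at `0`.
It diverges for `k = 0`, where the value is the junk `0`. -/
noncomputable def centralBinomSum (k : ℕ) : ℝ :=
  ∑' n : ℕ, centralBinomRatio (n + 1) / (n + 1) ^ k

/-- The sum of the `k`-th inverse powers of the zeros `m + 1/2` of `s ↦ betaRatio (-s)`, minus that
of its poles `m + 1`: the power sum in Newton's identities. The terms are paired because for
`k = 1` the two sums diverge separately. -/
noncomputable def halfShiftPowerSum (k : ℕ) : ℝ :=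
  ∑' m : ℕ, (1 / ((m : ℝ) + 1 / 2) ^ k - 1 / ((m : ℝ) + 1) ^ k)

theorem hasSum_div_pow_succ_mul_pow_succ {x t : ℝ} (w : ℝ) (ht : |t| < x) :
    HasSum (fun k : ℕ => w / x ^ (k + 1) * t ^ (k + 1)) (w * t / (x - t)) := by
  have hx : 0 < x := (abs_nonneg t).trans_lt ht
  have hsub : x - t ≠ 0 := (sub_pos.2 ((le_abs_self t).trans_lt ht)).ne'
  have hratio : |t / x| < 1 := by rwa [abs_div, abs_of_pos hx, div_lt_one hx]
  convert! (hasSum_geometric_of_abs_lt_one hratio).mul_left (w * t / x) using 1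
  · funext k
    rw [div_pow, pow_succ, pow_succ]
    field_simp
  · field_simp

theorem hasSum_pow_sub_pow_div_mul_pow {x y t : ℝ} (hx : |x * t| < 1) (hy : |y * t| < 1) :
    HasSum (fun k : ℕ => (x ^ (k + 1) - y ^ (k + 1)) / (k + 1) * t ^ (k + 1))
      (Real.log (1 - y * t) - Real.log (1 - x * t)) := by
  convert! (Real.hasSum_pow_div_log_of_abs_lt_one hx).sub
    (Real.hasSum_pow_div_log_of_abs_lt_one hy) using 1
  · funext k
    rw [mul_pow, mul_pow]
    ring
  · ring

theorem pow_succ_sub_pow_succ_div_le {x y : ℝ} (hy : 0 ≤ y) (hyx : y ≤ x) (k : ℕ) :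
    (x ^ (k + 1) - y ^ (k + 1)) / (k + 1) ≤ (x - y) * x ^ k := by
  have h := (le_abs_self _).trans (abs_pow_sub_pow_le (a := x) (b := y) (n := k + 1))
  rw [abs_of_nonneg (sub_nonneg.2 hyx), abs_of_nonneg hy, abs_of_nonneg (hy.trans hyx),
    max_eq_left hyx, Nat.add_sub_cancel] at h
  rw [div_le_iff₀ (by positivity)]
  push_cast at h
  linarith

theorem summable_one_div_add_half_sub_one_div_add_one :
    Summable fun m : ℕ => 1 / ((m : ℝ) + 1 / 2) - 1 / ((m : ℝ) + 1) := by
  have hsq : Summable fun m : ℕ => 1 / ((m : ℝ) + 1) ^ 2 :=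
    mod_cast (summable_nat_add_iff 1).2 (Real.summable_one_div_nat_pow.2 one_lt_two)
  refine .of_nonneg_of_le (fun m => ?_) (fun m => ?_) hsq
  · rw [sub_nonneg]
    gcongr
    norm_num
  · rw [div_sub_div _ _ (by positivity) (by positivity),
      div_le_div_iff₀ (by positivity) (by positivity)]
    nlinarith [m.cast_nonneg (α := ℝ)]

theorem hasSum_centralBinomSum_mul_pow {t : ℝ} (ht : |t| < 1) :
    HasSum (fun k => centralBinomSum (k + 1) * t ^ (k + 1)) (1 - betaRatio (-t)) := by
  have hbound (n k : ℕ) : ‖centralBinomRatio (n + 1) / (n + 1 : ℝ) ^ (k + 1) * t ^ (k + 1)‖ ≤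
      centralBinomRatio (n + 1) / (n + 1) * |t| ^ (k + 1) := by
    have ha := centralBinomRatio_pos (n + 1)
    rw [norm_mul, norm_pow, Real.norm_eq_abs t, Real.norm_of_nonneg (by positivity)]
    gcongr
    exact le_self_pow₀ (by linarith [n.cast_nonneg (α := ℝ)]) k.succ_ne_zero
  have hgeom : Summable fun k : ℕ => |t| ^ (k + 1) :=
    (summable_nat_add_iff 1).2 (summable_geometric_of_lt_one (abs_nonneg t) ht)
  have hsum := hasSum_tsum_of_norm_le_mul summable_centralBinomRatio_succ_div hgeom hbound
    fun n => hasSum_div_pow_succ_mul_pow_succ _ (ht.trans_le (by linarith [n.cast_nonneg (α := ℝ)]))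
  simp only [tsum_mul_right] at hsum
  convert! hsum using 1
  rw [betaRatio, sub_add_cancel_left, ← tsum_neg]
  simp only [mul_neg, neg_div, neg_neg, sub_eq_add_neg]

theorem hasSum_halfShiftPowerSum_div_mul_pow {t : ℝ} (ht : |t| < 1 / 2) :
    HasSum (fun k : ℕ => halfShiftPowerSum (k + 1) / (k + 1) * t ^ (k + 1))
      (∑' m : ℕ, (Real.log (1 - t / (m + 1)) - Real.log (1 - t / (m + 1 / 2)))) := by
  have hle (m : ℕ) : 1 / ((m : ℝ) + 1) ≤ 1 / (m + 1 / 2) := by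
    gcongr
    norm_num
  have hle_two (m : ℕ) : 1 / ((m : ℝ) + 1 / 2) ≤ 2 := by
    rw [div_le_iff₀ (by positivity)]
    linarith [m.cast_nonneg (α := ℝ)]
  have hbound (m k : ℕ) : ‖((1 / ((m : ℝ) + 1 / 2)) ^ (k + 1) - (1 / ((m : ℝ) + 1)) ^ (k + 1)) /
      (k + 1) * t ^ (k + 1)‖ ≤
      (1 / ((m : ℝ) + 1 / 2) - 1 / ((m : ℝ) + 1)) * (|t| * (2 * |t|) ^ k) := by
    have hnonneg := sub_nonneg.2 (hle m)
    have hpow := sub_nonneg.2 (pow_le_pow_left₀ (by positivity) (hle m) (k + 1))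
    rw [norm_mul, norm_pow, Real.norm_eq_abs t, Real.norm_of_nonneg (by positivity)]
    calc _ ≤ (1 / ((m : ℝ) + 1 / 2) - 1 / ((m : ℝ) + 1)) * 2 ^ k * |t| ^ (k + 1) := by
          gcongr
          refine (pow_succ_sub_pow_succ_div_le (by positivity) (hle m) k).trans ?_
          gcongr
          exact hle_two m
      _ = _ := by ring
  have hgeom : Summable fun k : ℕ => |t| * (2 * |t|) ^ k :=
    (summable_geometric_of_lt_one (by positivity) (by linarith)).mul_left _
  have hlt {x : ℝ} (hx : 0 ≤ x) (hx_two : x ≤ 2) : |x * t| < 1 := by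
    rw [abs_mul, abs_of_nonneg hx]
    nlinarith [abs_nonneg t]
  have hsum := hasSum_tsum_of_norm_le_mul summable_one_div_add_half_sub_one_div_add_one hgeom hbound
    fun m => hasSum_pow_sub_pow_div_mul_pow (hlt (by positivity) (hle_two m))
      (hlt (by positivity) ((hle m).trans (hle_two m)))
  simpa only [halfShiftPowerSum, tsum_mul_right, tsum_div_const, one_div_pow,
    one_div_mul_eq_div] using hsum

theorem betaRatio_neg_eq_exp {t : ℝ} (ht : t ≤ 0) :
    betaRatio (-t) =
      Real.exp (-∑' m : ℕ, (Real.log (1 - t / (m + 1)) - Real.log (1 - t / (m + 1 / 2)))) := by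
  have hs := neg_nonneg.2 ht
  rw [← Real.exp_log (zero_lt_one.trans_le (one_le_betaRatio hs)),
    ← (hasSum_log_betaRatio hs).tsum_eq, ← tsum_neg]
  simp only [neg_sub, neg_div, ← sub_eq_add_neg]

theorem succ_mul_centralBinomSum_succ (n : ℕ) :
    (n + 1) * centralBinomSum (n + 1) = halfShiftPowerSum (n + 1) -
      ∑ i ∈ Finset.range n, halfShiftPowerSum (i + 1) * centralBinomSum (n - i) := by
  have hnear : ∀ᶠ t : ℝ in 𝓝 0, |t| < 1 / 2 :=
    continuous_abs.continuousAt.eventually_lt continuousAt_const (by norm_num)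
  refine newton_identity_of_one_sub_eq_exp_neg
    (hnear.mono fun t ht => hasSum_centralBinomSum_mul_pow (by linarith))
    (hnear.mono fun t ht => hasSum_halfShiftPowerSum_div_mul_pow ht) ?_ n
  -- The product formula is available only for `t ≤ 0`; the identity theorem does the rest.
  have hneg : ∃ᶠ t : ℝ in 𝓝[<] (0 : ℝ), t < 0 := Eventually.frequently eventually_mem_nhdsWithin
  refine (hneg.filter_mono (nhdsLT_le_nhdsNE 0)).mono fun t ht => ?_
  rw [sub_sub_cancel, betaRatio_neg_eq_exp ht.le]

theorem centralBinomSum_six :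
    720 * centralBinomSum 6 =
      120 * halfShiftPowerSum 6 - 144 * halfShiftPowerSum 5 * halfShiftPowerSum 1
        - 90 * halfShiftPowerSum 4 * halfShiftPowerSum 2
        + 90 * halfShiftPowerSum 4 * halfShiftPowerSum 1 ^ 2 - 40 * halfShiftPowerSum 3 ^ 2
        + 120 * halfShiftPowerSum 3 * halfShiftPowerSum 2 * halfShiftPowerSum 1
        - 40 * halfShiftPowerSum 3 * halfShiftPowerSum 1 ^ 3 + 15 * halfShiftPowerSum 2 ^ 3
        - 45 * halfShiftPowerSum 2 ^ 2 * halfShiftPowerSum 1 ^ 2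
        + 15 * halfShiftPowerSum 2 * halfShiftPowerSum 1 ^ 4 - halfShiftPowerSum 1 ^ 6 := by
  have hrec (n : ℕ) : centralBinomSum (n + 1) = (halfShiftPowerSum (n + 1) -
      ∑ i ∈ Finset.range n, halfShiftPowerSum (i + 1) * centralBinomSum (n - i)) / (n + 1) := by
    rw [← succ_mul_centralBinomSum_succ, mul_div_cancel_left₀ _ n.cast_add_one_ne_zero]
  simp only [hrec, Finset.sum_range_succ, Finset.sum_range_zero, Nat.reduceAdd, Nat.reduceSub]
  push_cast
  ring

theorem sum_range_one_div_add_half_sub_one_div_add_one (N : ℕ) :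
    ∑ m ∈ Finset.range N, (1 / ((m : ℝ) + 1 / 2) - 1 / ((m : ℝ) + 1)) =
      2 * (harmonic (2 * N) - harmonic N) := by
  induction N with
  | zero => simp
  | succ N ih =>
    rw [Finset.sum_range_succ, ih, mul_add_one, harmonic_succ, harmonic_succ, harmonic_succ]
    push_cast
    field_simp
    ring

theorem tendsto_harmonic_two_mul_sub_harmonic :
    Tendsto (fun N : ℕ => (harmonic (2 * N) - harmonic N : ℝ)) atTop (𝓝 (Real.log 2)) := by
  have htwo : Tendsto (fun N : ℕ => 2 * N) atTop atTop := tendsto_id.const_mul_atTop' two_pos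
  have h := ((Real.tendsto_harmonic_sub_log.comp htwo).sub
    Real.tendsto_harmonic_sub_log).add_const (Real.log 2)
  rw [sub_self, zero_add] at h
  refine h.congr' ?_
  filter_upwards [eventually_gt_atTop 0] with N hN
  have hlog : Real.log ((2 * N : ℕ) : ℝ) = Real.log 2 + Real.log N := by
    rw [Nat.cast_mul, Real.log_mul (by norm_num) (by positivity), Nat.cast_ofNat]
  rw [Function.comp_apply, hlog]
  ring

theorem halfShiftPowerSum_one : halfShiftPowerSum 1 = 2 * Real.log 2 := by
  simp only [halfShiftPowerSum, pow_one]
  refine tendsto_nhds_unique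
    summable_one_div_add_half_sub_one_div_add_one.hasSum.tendsto_sum_nat ?_
  simpa only [sum_range_one_div_add_half_sub_one_div_add_one]
    using tendsto_harmonic_two_mul_sub_harmonic.const_mul 2

section Zeta

variable {k : ℕ}

theorem hasSum_one_div_nat_pow_riemannZeta (hk : 1 < k) :
    HasSum (fun n : ℕ => 1 / (n : ℂ) ^ k) (riemannZeta k) := by
  rw [zeta_nat_eq_tsum_of_gt_one hk]
  have h := Complex.summable_one_div_nat_cpow (p := k) |>.2 (mod_cast hk)
  simpa only [Complex.cpow_natCast] using h.hasSum

theorem hasSum_one_div_add_one_pow_riemannZeta (hk : 1 < k) :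
    HasSum (fun m : ℕ => 1 / ((m : ℂ) + 1) ^ k) (riemannZeta k) := by
  simpa [(zero_lt_one.trans hk).ne'] using
    (hasSum_nat_add_iff' 1).2 (hasSum_one_div_nat_pow_riemannZeta hk)

theorem hasSum_one_div_add_half_pow_riemannZeta (hk : 1 < k) :
    HasSum (fun m : ℕ => 1 / ((m : ℂ) + 1 / 2) ^ k) ((2 ^ k - 1) * riemannZeta k) := by
  have hall := (hasSum_one_div_nat_pow_riemannZeta hk).mul_left (2 ^ k)
  have heven : HasSum (fun m : ℕ => 2 ^ k * (1 / ((2 * m : ℕ) : ℂ) ^ k)) (riemannZeta k) := by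
    refine (hasSum_one_div_nat_pow_riemannZeta hk).congr_fun fun m => ?_
    rw [Nat.cast_mul, mul_pow, Nat.cast_ofNat]
    field_simp
  have hodd (m : ℕ) : 1 / ((m : ℂ) + 1 / 2) ^ k = 2 ^ k * (1 / ((2 * m + 1 : ℕ) : ℂ) ^ k) := by
    have : (((2 * m + 1 : ℕ) : ℂ)) = 2 * (m + 1 / 2) := by push_cast; ring
    rw [this, mul_pow]
    field_simp
  have hodd_summable : Summable fun m : ℕ => 1 / ((m : ℂ) + 1 / 2) ^ k := by
    simp only [hodd]
    exact hall.summable.comp_injective (i := fun m : ℕ => 2 * m + 1)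
      fun a b h => by simpa using h
  have hsplit := (heven.even_add_odd (f := fun n : ℕ => 2 ^ k * (1 / (n : ℂ) ^ k))
    (by simpa only [hodd] using hodd_summable.hasSum)).unique hall
  convert! hodd_summable.hasSum using 1
  simp only [hodd]
  linear_combination -hsplit

theorem ofReal_halfShiftPowerSum (hk : 1 < k) :
    (halfShiftPowerSum k : ℂ) = (2 ^ k - 2) * riemannZeta k := by
  have h := (hasSum_one_div_add_half_pow_riemannZeta hk).sub
    (hasSum_one_div_add_one_pow_riemannZeta hk)
  rw [halfShiftPowerSum, Complex.ofReal_tsum]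
  push_cast
  rw [h.tsum_eq]
  ring

end Zeta

theorem bernoulli_six : bernoulli 6 = 1 / 42 := by
  have h₅ : bernoulli' 5 = 0 := bernoulli'_eq_zero_of_odd (by decide) (by norm_num)
  rw [bernoulli_eq_bernoulli'_of_ne_one (by decide), bernoulli'_def]
  norm_num [Finset.sum_range_succ, Nat.choose, h₅]

theorem riemannZeta_six : riemannZeta 6 = Real.pi ^ 6 / 945 := by
  have h := riemannZeta_two_mul_nat (k := 3) (by decide)
  norm_num [bernoulli_six, Nat.factorial] at h
  rw [h]
  ring

/-- ∑_{n=1}^∞ C(2n,n)/(4ⁿ·n⁶) = (79/15120)·π⁶ - 12·ζ(5)·log 2 + (1/20)·π⁴·log²2 - 2·ζ(3)²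
+ (2/3)·ζ(3)·π²·log 2 - (8/3)·ζ(3)·log³2 + (1/9)·π²·log⁴2 - (4/45)·log⁶2. -/
theorem centralBinom_inv_n6_sum :
    ((∑' n : ℕ, (Nat.centralBinom (n + 1) : ℝ) /
        ((4 : ℝ) ^ (n + 1) * ((n : ℝ) + 1) ^ 6) : ℝ) : ℂ) =
      (79 / 15120) * (Real.pi : ℂ) ^ 6 - 12 * riemannZeta 5 * (Real.log 2 : ℂ)
        + (1 / 20) * (Real.pi : ℂ) ^ 4 * (Real.log 2 : ℂ) ^ 2
        - 2 * riemannZeta 3 ^ 2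
        + (2 / 3) * riemannZeta 3 * (Real.pi : ℂ) ^ 2 * (Real.log 2 : ℂ)
        - (8 / 3) * riemannZeta 3 * (Real.log 2 : ℂ) ^ 3
        + (1 / 9) * (Real.pi : ℂ) ^ 2 * (Real.log 2 : ℂ) ^ 4
        - (4 / 45) * (Real.log 2 : ℂ) ^ 6 := by
  have hseries : ∑' n : ℕ, (Nat.centralBinom (n + 1) : ℝ) / (4 ^ (n + 1) * ((n : ℝ) + 1) ^ 6) =
      centralBinomSum 6 := by
    simp only [centralBinomSum, centralBinomRatio, div_div]
  have hnewton := congrArg (fun x : ℝ => (x : ℂ)) centralBinomSum_six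
  have hζ₂ := ofReal_halfShiftPowerSum (k := 2) (by norm_num)
  have hζ₃ := ofReal_halfShiftPowerSum (k := 3) (by norm_num)
  have hζ₄ := ofReal_halfShiftPowerSum (k := 4) (by norm_num)
  have hζ₅ := ofReal_halfShiftPowerSum (k := 5) (by norm_num)
  have hζ₆ := ofReal_halfShiftPowerSum (k := 6) (by norm_num)
  push_cast [halfShiftPowerSum_one, riemannZeta_two, riemannZeta_four, riemannZeta_six]
    at hnewton hζ₂ hζ₃ hζ₄ hζ₅ hζ₆
  rw [hζ₂, hζ₃, hζ₄, hζ₅, hζ₆] at hnewton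
  rw [hseries]
  linear_combination hnewton / 720
end

section
/- 2·∑_{n=1}^∞ 4^{n-1} / (n³ · C(2n,n)) = -ζ(3) + (1/3)·π²·log 2 + (4/3)·log³2 - (1/2)·∑_{n=1}^∞ (C(2n,n)/(4ⁿ · n³))·(3 + 2n(H_{n-1} - H_{2n-1})), where both series converge. -/
/-!
Write `aₘ = C(2m, m) / 4ᵐ` and `B(x) = B(x, 1/2) = ∑ₘ aₘ / (m + x)`. The functional equation
`x B(x) = (x + 1/2) B(x + 1)` gives `B(n) = 1 / (n aₙ)` and `B(n + 1/2) = π aₙ`. It also shows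
that `-B'/B` is an alternating Hurwitz series, so that Newton's identities express the Taylor
coefficients of `B` at `1`, and with them `∑ aₘ / m` and `∑ aₘ / m³` over `m ≥ 1`, through `log 2`,
`ζ(2)` and `ζ(3)`.

Put `hₘ(δ) = ∑_{i < m} 1 / (i + δ)`. Exchanging the order of summation in `∑ⱼ B(j + δ) / (j + δ)²`
evaluates this sum up to the Euler sum `∑ aₘ hₘ(δ) / m²`. For `δ = 1/2` its terms are
`π aⱼ / (j + 1/2)²`, so `∑ aₘ hₘ(1/2) / m²` becomes known; for `δ = 1` it is four times the series
of inverse central binomial coefficients. The other series in the theorem is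
`∑ (2 aₘ / m³ + aₘ hₘ(1) / m² - aₘ hₘ(1/2) / m²)`, and the unknown Euler sum cancels.
-/

open Filter Finset Topology

/-! ### Weighted Hurwitz series -/

/-- The Hurwitz zeta series `∑ₘ wₘ / (m + x)ᵏ` with weights `w`; constant weights `1` give the
Hurwitz zeta value `ζ(k, x)`. The order is a natural number and `x` is meant to be positive. -/
noncomputable def hurwitzSeries (w : ℕ → ℝ) (k : ℕ) (x : ℝ) : ℝ :=
  ∑' m : ℕ, w m / (m + x) ^ k

theorem hasDerivAt_div_const_add_pow {𝕜 : Type*} [NontriviallyNormedField 𝕜] (w : 𝕜) (k : ℕ)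
    {c x : 𝕜} (hx : c + x ≠ 0) :
    HasDerivAt (fun y ↦ w / (c + y) ^ k) (-k * (w / (c + x) ^ (k + 1))) x := by
  have h := (((hasDerivAt_id x).const_add c).fun_pow k).fun_inv (pow_ne_zero k hx) |>.const_mul w
  simp only [div_eq_mul_inv]
  refine h.congr_deriv ?_
  rcases k with _ | k
  · simp
  · simp only [id, Nat.add_sub_cancel]
    field_simp
    ring

section HurwitzSeries

variable {w : ℕ → ℝ} {k l : ℕ} {x y : ℝ}

theorem summable_hurwitzSeries_of_le (hw : Summable fun m : ℕ ↦ w m / (m + y) ^ k) (hy : 0 < y)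
    (hkl : k ≤ l) (hx : 0 < x) : Summable fun m : ℕ ↦ w m / (m + x) ^ l := by
  induction l, hkl using Nat.le_induction with
  | base =>
    refine Summable.of_norm_bounded (hw.norm.mul_left ((1 + y / x) ^ k)) fun m ↦ ?_
    have hcmp : (m + y) / (m + x) ≤ 1 + y / x := by
      rw [div_le_iff₀ (by positivity)]
      have : 0 ≤ y / x * m := by positivity
      linear_combination hx.le + this - div_mul_cancel₀ y hx.ne'
    calc ‖w m / (m + x) ^ k‖ = ((m + y) / (m + x)) ^ k * ‖w m / (m + y) ^ k‖ := by
          rw [norm_div, norm_div, Real.norm_of_nonneg (by positivity : 0 ≤ (m + x) ^ k),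
            Real.norm_of_nonneg (by positivity : 0 ≤ (m + y) ^ k), div_pow]
          field_simp
      _ ≤ _ := by gcongr
  | succ l _ ih =>
    refine Summable.of_norm_bounded (ih.norm.mul_left x⁻¹) fun m ↦ ?_
    rw [pow_succ, ← div_div, norm_div, div_eq_inv_mul, Real.norm_of_nonneg (by positivity)]
    gcongr
    linarith [m.cast_nonneg (α := ℝ)]

theorem summable_one_div_nat_add_pow (hk : 2 ≤ k) (hx : 0 < x) :
    Summable fun m : ℕ ↦ 1 / ((m : ℝ) + x) ^ k := by
  refine summable_hurwitzSeries_of_le (w := 1) (y := 1) ?_ one_pos hk hx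
  simpa using (summable_nat_add_iff 1).2 (Real.summable_one_div_nat_pow.2 one_lt_two)

theorem hasDerivAt_hurwitzSeries (hw : Summable fun m : ℕ ↦ w m / (m + y) ^ k) (hy : 0 < y)
    (hx : 0 < x) : HasDerivAt (hurwitzSeries w k) (-k * hurwitzSeries w (k + 1) x) x := by
  have hx2 : 0 < x / 2 := half_pos hx
  have hbound (m : ℕ) (z : ℝ) (hz : z ∈ Set.Ioi (x / 2)) :
      ‖-k * (w m / (m + z) ^ (k + 1))‖ ≤ k * ‖w m / (m + x / 2) ^ (k + 1)‖ := by
    have hxz : x / 2 ≤ z := (Set.mem_Ioi.1 hz).le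
    have hz0 : 0 < z := hx2.trans_le hxz
    rw [norm_mul, norm_neg, Real.norm_natCast, norm_div, norm_div,
      Real.norm_of_nonneg (by positivity : 0 ≤ (m + z) ^ (k + 1)),
      Real.norm_of_nonneg (by positivity : 0 ≤ (m + x / 2) ^ (k + 1))]
    gcongr
  have hderiv (m : ℕ) (z : ℝ) (hz : z ∈ Set.Ioi (x / 2)) :
      HasDerivAt (fun z ↦ w m / (m + z) ^ k) (-k * (w m / (m + z) ^ (k + 1))) z :=
    have : 0 < z := hx2.trans (Set.mem_Ioi.1 hz)
    hasDerivAt_div_const_add_pow _ k (by positivity)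
  have h := hasDerivAt_tsum_of_isPreconnected
    ((summable_hurwitzSeries_of_le hw hy k.le_succ hx2).norm.mul_left (k : ℝ)) isOpen_Ioi
    isPreconnected_Ioi hderiv hbound (half_lt_self hx)
    (summable_hurwitzSeries_of_le hw hy le_rfl hx) (half_lt_self hx)
  rwa [tsum_mul_left] at h

theorem hurwitzSeries_eq_zero_add (hw : Summable fun m : ℕ ↦ w m / (m + x) ^ k) :
    hurwitzSeries w k x = w 0 / x ^ k + hurwitzSeries (fun m ↦ w (m + 1)) k (x + 1) := by
  rw [hurwitzSeries, hw.tsum_eq_zero_add, hurwitzSeries]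
  simp only [Nat.cast_zero, zero_add, Nat.cast_succ, add_assoc, add_comm (1 : ℝ)]

theorem hurwitzSeries_le_of_le (hw : ∀ m, 0 ≤ w m) (hsum : Summable fun m : ℕ ↦ w m / (m + x) ^ k)
    (hx : 0 < x) (hxy : x ≤ y) : hurwitzSeries w k y ≤ hurwitzSeries w k x := by
  refine Summable.tsum_le_tsum (fun m ↦ ?_)
    (summable_hurwitzSeries_of_le hsum hx le_rfl (hx.trans_le hxy)) hsum
  have := hw m
  gcongr

theorem hurwitzSeries_succ_le_div (hw : ∀ m, 0 ≤ w m)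
    (hsum : Summable fun m : ℕ ↦ w m / (m + x) ^ k) (hx : 0 < x) :
    hurwitzSeries w (k + 1) x ≤ hurwitzSeries w k x / x := by
  rw [hurwitzSeries, hurwitzSeries, ← tsum_div_const]
  refine Summable.tsum_le_tsum (fun m ↦ ?_)
    (summable_hurwitzSeries_of_le hsum hx k.le_succ hx) (hsum.div_const x)
  have := hw m
  rw [pow_succ, ← div_div]
  gcongr
  linarith [m.cast_nonneg (α := ℝ)]

end HurwitzSeries

/-! ### Telescoping series and shifted harmonic numbers -/

theorem hasSum_sub_succ_of_antitone {f : ℕ → ℝ} {l : ℝ} (hf : Antitone f)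
    (hl : Tendsto f atTop (𝓝 l)) : HasSum (fun n ↦ f n - f (n + 1)) (f 0 - l) := by
  rw [hasSum_iff_tendsto_nat_of_nonneg fun n ↦ sub_nonneg.2 (hf n.le_succ)]
  simpa only [sum_range_sub'] using hl.const_sub (f 0)

theorem hasSum_sub_add_of_antitone {f : ℕ → ℝ} (hf : Antitone f) (hl : Tendsto f atTop (𝓝 0))
    (M : ℕ) : HasSum (fun n ↦ f n - f (n + M)) (∑ i ∈ range M, f i) := by
  induction M with
  | zero => simp
  | succ M ih =>
    have hstep := hasSum_sub_succ_of_antitone (f := fun n ↦ f (n + M))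
      (fun m n hmn ↦ hf (by gcongr)) (hl.comp (tendsto_add_atTop_nat M))
    rw [sum_range_succ]
    convert ih.add hstep using 2 with n
    · rw [show n + (M + 1) = n + 1 + M by ring]
      ring
    · simp

theorem antitone_one_div_nat_add_pow (k : ℕ) {x : ℝ} (hx : 0 < x) :
    Antitone fun n : ℕ ↦ 1 / ((n : ℝ) + x) ^ k := by
  intro m n hmn
  dsimp only
  gcongr

theorem tendsto_one_div_nat_add_pow {k : ℕ} (hk : k ≠ 0) (x : ℝ) :
    Tendsto (fun n : ℕ ↦ 1 / ((n : ℝ) + x) ^ k) atTop (𝓝 0) :=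
  tendsto_const_nhds.div_atTop <| (tendsto_pow_atTop hk).comp <|
    tendsto_atTop_add_const_right _ x tendsto_natCast_atTop_atTop

/-- The shifted harmonic number `∑_{i < m} 1 / (i + δ)`: `δ = 1` gives the `m`-th harmonic number
and `δ = 1/2` twice the sum of the reciprocals of the first `m` odd numbers. -/
noncomputable def shiftedHarmonic (δ : ℝ) (m : ℕ) : ℝ :=
  ∑ i ∈ range m, 1 / (i + δ)

theorem hasSum_shiftedHarmonic {δ : ℝ} (hδ : 0 < δ) (m : ℕ) :
    HasSum (fun j : ℕ ↦ 1 / ((j : ℝ) + δ) - 1 / (m + (j + δ))) (shiftedHarmonic δ m) := by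
  have h := hasSum_sub_add_of_antitone (antitone_one_div_nat_add_pow 1 hδ)
    (tendsto_one_div_nat_add_pow one_ne_zero δ) m
  simp only [pow_one, Nat.cast_add] at h
  simpa only [shiftedHarmonic, add_right_comm, add_comm (m : ℝ)] using h

theorem shiftedHarmonic_one (m : ℕ) : shiftedHarmonic 1 m = harmonic m := by
  simp [shiftedHarmonic, harmonic]

theorem shiftedHarmonic_one_half (m : ℕ) :
    shiftedHarmonic (1 / 2) m = 2 * harmonic (2 * m) - harmonic m := by
  induction m with
  | zero => simp [shiftedHarmonic]
  | succ m ih =>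
    rw [shiftedHarmonic, sum_range_succ, ← shiftedHarmonic, ih, mul_add_one, harmonic_succ,
      harmonic_succ, harmonic_succ]
    push_cast
    field

/-! ### Euler sums by exchanging the order of summation -/

/-- The Euler-type sum `∑_{m ≥ 1} wₘ hₘ(δ) / m²` with `hₘ(δ)` the shifted harmonic numbers. -/
noncomputable def eulerSum (w : ℕ → ℝ) (δ : ℝ) : ℝ :=
  ∑' m : ℕ, w (m + 1) * shiftedHarmonic δ (m + 1) / ((m : ℝ) + 1) ^ 2

theorem hasSum_one_div_sq_mul_add {δ : ℝ} (hδ : 0 < δ) {m : ℕ} (hm : m ≠ 0) :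
    HasSum (fun j : ℕ ↦ 1 / ((j + δ) ^ 2 * (m + (j + δ))))
      (hurwitzSeries 1 2 δ / m - shiftedHarmonic δ m / m ^ 2) := by
  have hζ := (summable_one_div_nat_add_pow le_rfl hδ).hasSum.div_const (m : ℝ)
  refine (hζ.sub ((hasSum_shiftedHarmonic hδ m).div_const ((m : ℝ) ^ 2))).congr_fun fun j ↦ ?_
  have : (0 : ℝ) < m := by positivity
  field

section EulerSum

variable {w : ℕ → ℝ} {δ : ℝ}

theorem summable_succ_div_add_one (hsum : Summable fun m : ℕ ↦ w m / ((m : ℝ) + 1)) :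
    Summable fun m : ℕ ↦ w (m + 1) / ((m : ℝ) + 1) := by
  have h := (summable_nat_add_iff 1).2 hsum
  simp only [Nat.cast_succ, add_assoc, one_add_one_eq_two] at h
  simpa using summable_hurwitzSeries_of_le (k := 1) (w := fun m ↦ w (m + 1)) (by simpa using h)
    two_pos le_rfl one_pos

theorem summable_eulerSum (hw : ∀ m, 0 ≤ w m) (hsum : Summable fun m : ℕ ↦ w m / ((m : ℝ) + 1))
    (hδ : 0 < δ) :
    Summable fun m : ℕ ↦ w (m + 1) * shiftedHarmonic δ (m + 1) / ((m : ℝ) + 1) ^ 2 := by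
  refine .of_nonneg_of_le (fun m ↦ ?_) (fun m ↦ ?_)
    ((summable_succ_div_add_one hsum).mul_right (1 / δ))
  · have := hw (m + 1)
    unfold shiftedHarmonic
    positivity
  · have hw' : 0 ≤ w (m + 1) := hw (m + 1)
    have hle : shiftedHarmonic δ (m + 1) ≤ (m + 1) * (1 / δ) := by
      have := sum_le_card_nsmul (range (m + 1)) (fun i : ℕ ↦ 1 / ((i : ℝ) + δ)) (1 / δ)
        fun i _ ↦ by gcongr; linarith [i.cast_nonneg (α := ℝ)]
      simpa [shiftedHarmonic] using this
    calc w (m + 1) * shiftedHarmonic δ (m + 1) / ((m : ℝ) + 1) ^ 2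
        ≤ w (m + 1) * ((m + 1) * (1 / δ)) / ((m : ℝ) + 1) ^ 2 := by gcongr
      _ = _ := by field

theorem hasSum_hurwitzSeries_succ_div_sq (hw : ∀ m, 0 ≤ w m)
    (hsum : Summable fun m : ℕ ↦ w m / ((m : ℝ) + 1)) (hδ : 0 < δ) :
    HasSum (fun j : ℕ ↦ hurwitzSeries (fun m ↦ w (m + 1)) 1 (j + δ + 1) / (j + δ) ^ 2)
      (hurwitzSeries 1 2 δ * hurwitzSeries (fun m ↦ w (m + 1)) 1 1 - eulerSum w δ) := by
  have hsum' := summable_succ_div_add_one hsum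
  let f : ℕ × ℕ → ℝ := fun p ↦
    w (p.1 + 1) * (1 / ((p.2 + δ) ^ 2 * ((p.1 + 1 : ℕ) + (p.2 + δ))))
  have hrow (m : ℕ) : HasSum (fun j ↦ f (m, j)) (w (m + 1) *
      (hurwitzSeries 1 2 δ / (m + 1 : ℕ) - shiftedHarmonic δ (m + 1) / (m + 1 : ℕ) ^ 2)) :=
    (hasSum_one_div_sq_mul_add hδ m.succ_ne_zero).mul_left (w (m + 1))
  have htotal : HasSum (fun m : ℕ ↦ w (m + 1) *
      (hurwitzSeries 1 2 δ / (m + 1 : ℕ) - shiftedHarmonic δ (m + 1) / (m + 1 : ℕ) ^ 2))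
      (hurwitzSeries 1 2 δ * hurwitzSeries (fun m ↦ w (m + 1)) 1 1 - eulerSum w δ) := by
    have htail : HasSum (fun m : ℕ ↦ w (m + 1) / ((m : ℝ) + 1))
        (hurwitzSeries (fun m ↦ w (m + 1)) 1 1) := by
      simpa only [hurwitzSeries, pow_one] using hsum'.hasSum
    refine ((htail.mul_left (hurwitzSeries 1 2 δ)).sub
      (summable_eulerSum hw hsum hδ).hasSum).congr_fun fun m ↦ ?_
    push_cast
    ring
  have hf : Summable f := by
    refine (summable_prod_of_nonneg fun p ↦ ?_).2 ⟨fun m ↦ (hrow m).summable,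
      htotal.summable.congr fun m ↦ (hrow m).tsum_eq.symm⟩
    have := hw (p.1 + 1)
    exact mul_nonneg this (by positivity)
  have hcol (j : ℕ) : HasSum (fun m ↦ f (m, j))
      (hurwitzSeries (fun m ↦ w (m + 1)) 1 (j + δ + 1) / (j + δ) ^ 2) := by
    have hj : 0 < j + δ + 1 := by positivity
    refine ((summable_hurwitzSeries_of_le (k := 1) (by simpa using hsum') one_pos le_rfl
      hj).hasSum.div_const _).congr_fun fun m ↦ ?_
    simp only [f]
    push_cast
    field
  have hswap : HasSum (f ∘ Equiv.prodComm ℕ ℕ) (∑' p, f p) :=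
    (Equiv.prodComm ℕ ℕ).hasSum_iff.2 hf.hasSum
  rw [(hf.hasSum.prod_fiberwise hrow).unique htotal] at hswap
  exact hswap.prod_fiberwise hcol

theorem hasSum_hurwitzSeries_div_sq (hw : ∀ m, 0 ≤ w m)
    (hsum : Summable fun m : ℕ ↦ w m / ((m : ℝ) + 1)) (hδ : 0 < δ) :
    HasSum (fun j : ℕ ↦ hurwitzSeries w 1 (j + δ) / (j + δ) ^ 2)
      (w 0 * hurwitzSeries 1 3 δ +
        (hurwitzSeries 1 2 δ * hurwitzSeries (fun m ↦ w (m + 1)) 1 1 - eulerSum w δ)) := by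
  have hζ := (summable_one_div_nat_add_pow (k := 3) (by norm_num) hδ).hasSum.mul_left (w 0)
  refine (hζ.add (hasSum_hurwitzSeries_succ_div_sq hw hsum hδ)).congr_fun fun j ↦ ?_
  have hj : 0 < j + δ := by positivity
  rw [hurwitzSeries_eq_zero_add
    (summable_hurwitzSeries_of_le (by simpa using hsum) one_pos le_rfl hj)]
  field

end EulerSum

/-! ### The alternating Hurwitz series -/

/-- The alternating Hurwitz series `2ᵏ ∑ₙ (-1)ⁿ / (n + 2x)ᵏ`, with consecutive terms paired so that
it is an unconditionally convergent sum also for `k = 1`. -/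
noncomputable def alternatingHurwitz (k : ℕ) (x : ℝ) : ℝ :=
  ∑' m : ℕ, (1 / (m + x) ^ k - 1 / (m + (x + 1 / 2)) ^ k)

section AlternatingHurwitz

variable {k : ℕ} {x : ℝ}

theorem summable_alternatingHurwitz (hk : k ≠ 0) (hx : 0 < x) :
    Summable fun m : ℕ ↦ 1 / ((m : ℝ) + x) ^ k - 1 / ((m : ℝ) + (x + 1 / 2)) ^ k := by
  refine .of_nonneg_of_le (fun m ↦ ?_) (fun m ↦ ?_) (hasSum_sub_succ_of_antitone
    (antitone_one_div_nat_add_pow k hx) (tendsto_one_div_nat_add_pow hk x)).summable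
  · rw [sub_nonneg]
    gcongr
    norm_num
  · push_cast
    gcongr ?_ - 1 / ?_ ^ k
    linarith

theorem alternatingHurwitz_add_alternatingHurwitz_add_half (hk : k ≠ 0) (hx : 0 < x) :
    alternatingHurwitz k x + alternatingHurwitz k (x + 1 / 2) = 1 / x ^ k := by
  have htele := hasSum_sub_succ_of_antitone (antitone_one_div_nat_add_pow k hx)
    (tendsto_one_div_nat_add_pow hk x)
  rw [alternatingHurwitz, alternatingHurwitz, ← (summable_alternatingHurwitz hk hx).tsum_add
    (summable_alternatingHurwitz hk (by positivity : 0 < x + 1 / 2))]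
  have hterm (m : ℕ) : (m : ℝ) + (x + 1 / 2 + 1 / 2) = (m + 1 : ℕ) + x := by
    push_cast
    ring
  simpa only [hterm, sub_add_sub_cancel, Nat.cast_zero, zero_add, sub_zero] using htele.tsum_eq

theorem hasDerivAt_alternatingHurwitz (hk : k ≠ 0) (hx : 0 < x) :
    HasDerivAt (alternatingHurwitz k) (-k * alternatingHurwitz (k + 1) x) x := by
  have hx2 : 0 < x / 2 := half_pos hx
  have hderiv (m : ℕ) (z : ℝ) (hz : z ∈ Set.Ioi (x / 2)) :
      HasDerivAt (fun z : ℝ ↦ 1 / (m + z) ^ k - 1 / (m + (z + 1 / 2)) ^ k)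
        (-k * (1 / (m + z) ^ (k + 1) - 1 / (m + (z + 1 / 2)) ^ (k + 1))) z := by
    have hz0 : 0 < z := hx2.trans (Set.mem_Ioi.1 hz)
    rw [mul_sub]
    exact (hasDerivAt_div_const_add_pow 1 k (by positivity)).sub
      ((hasDerivAt_div_const_add_pow 1 k (by positivity)).comp_add_const z (1 / 2))
  have hbound (m : ℕ) (z : ℝ) (hz : z ∈ Set.Ioi (x / 2)) :
      ‖-k * (1 / (m + z) ^ (k + 1) - 1 / (m + (z + 1 / 2)) ^ (k + 1))‖ ≤
        k * (1 / (m + x / 2) ^ (k + 1)) := by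
    have hxz : x / 2 ≤ z := (Set.mem_Ioi.1 hz).le
    have hz0 : 0 < z := hx2.trans_le hxz
    have hmono : 1 / ((m : ℝ) + (z + 1 / 2)) ^ (k + 1) ≤ 1 / (m + z) ^ (k + 1) := by
      gcongr
      norm_num
    rw [norm_mul, norm_neg, Real.norm_natCast, Real.norm_of_nonneg (sub_nonneg.2 hmono)]
    gcongr
    calc 1 / ((m : ℝ) + z) ^ (k + 1) - 1 / (m + (z + 1 / 2)) ^ (k + 1)
        ≤ 1 / (m + z) ^ (k + 1) := sub_le_self _ (by positivity)
      _ ≤ 1 / (m + x / 2) ^ (k + 1) := by gcongr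
  have h := hasDerivAt_tsum_of_isPreconnected
    ((summable_one_div_nat_add_pow (by lia) hx2).mul_left (k : ℝ)) isOpen_Ioi
    isPreconnected_Ioi hderiv hbound (half_lt_self hx) (summable_alternatingHurwitz hk hx)
    (half_lt_self hx)
  rwa [tsum_mul_left] at h

theorem hurwitzSeries_one_one_half (hk : 2 ≤ k) :
    hurwitzSeries 1 k (1 / 2) = (2 ^ k - 1) * hurwitzSeries 1 k 1 := by
  have heven := (summable_one_div_nat_add_pow hk one_half_pos).hasSum.div_const ((2 : ℝ) ^ k)
  have hodd := (summable_one_div_nat_add_pow hk one_pos).hasSum.div_const ((2 : ℝ) ^ k)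
  have hall : HasSum (fun n : ℕ ↦ 1 / ((n : ℝ) + 1) ^ k)
      (hurwitzSeries 1 k (1 / 2) / 2 ^ k + hurwitzSeries 1 k 1 / 2 ^ k) := by
    refine HasSum.even_add_odd (heven.congr_fun fun m ↦ ?_) (hodd.congr_fun fun m ↦ ?_)
    · rw [div_div, ← mul_pow]
      push_cast
      ring_nf
    · rw [div_div, ← mul_pow]
      push_cast
      ring_nf
  have h : hurwitzSeries 1 k 1 = hurwitzSeries 1 k (1 / 2) / 2 ^ k + hurwitzSeries 1 k 1 / 2 ^ k :=
    hall.tsum_eq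
  field_simp at h
  linear_combination -h

theorem alternatingHurwitz_one_half_right (hk : 2 ≤ k) :
    alternatingHurwitz k (1 / 2) = (2 ^ k - 2) * hurwitzSeries 1 k 1 := by
  have h : alternatingHurwitz k (1 / 2) = hurwitzSeries 1 k (1 / 2) - hurwitzSeries 1 k 1 := by
    rw [alternatingHurwitz, add_halves]
    exact (summable_one_div_nat_add_pow hk one_half_pos).tsum_sub
      (summable_one_div_nat_add_pow hk one_pos)
  rw [h, hurwitzSeries_one_one_half hk]
  ring

theorem alternatingHurwitz_one_one_half : alternatingHurwitz 1 (1 / 2) = 2 * Real.log 2 := by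
  have hpartial : Tendsto (fun N : ℕ ↦ shiftedHarmonic (1 / 2) N - shiftedHarmonic 1 N) atTop
      (𝓝 (2 * Real.log 2)) := by
    have hγ := Real.tendsto_harmonic_sub_log
    have hγ2 := hγ.comp (tendsto_id.const_mul_atTop' two_pos : Tendsto (2 * · : ℕ → ℕ) atTop atTop)
    have hlim := ((hγ2.sub hγ).const_mul 2).add_const (2 * Real.log 2)
    rw [sub_self, mul_zero, zero_add] at hlim
    refine hlim.congr' ?_
    filter_upwards [eventually_ne_atTop 0] with N hN
    have hlog : Real.log (2 * N : ℕ) = Real.log 2 + Real.log N := by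
      rw [Nat.cast_mul, Nat.cast_two, Real.log_mul two_ne_zero (Nat.cast_ne_zero.2 hN)]
    rw [shiftedHarmonic_one_half, shiftedHarmonic_one, Function.comp_apply, hlog]
    ring
  refine tendsto_nhds_unique
    (summable_alternatingHurwitz one_ne_zero one_half_pos).hasSum.tendsto_sum_nat ?_
  simpa only [shiftedHarmonic, pow_one, add_halves, sum_sub_distrib] using hpartial

end AlternatingHurwitz

/-! ### Newton identities for logarithmic derivatives -/

-- Up to sign and factorials `A i` and `E i` are the derivatives of `A 0` and `E 0`; the hypothesis
-- `A 1 = A 0 * E 0` says that `-E 0` is the logarithmic derivative of `A 0`.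
theorem succ_mul_eq_sum_antidiagonal_of_hasDerivAt {𝕜 : Type*} [NontriviallyNormedField 𝕜]
    [CharZero 𝕜] {A E : ℕ → 𝕜 → 𝕜} {U : Set 𝕜} (hU : IsOpen U)
    (hA : ∀ i, ∀ x ∈ U, HasDerivAt (A i) (-(i + 1 : ℕ) * A (i + 1) x) x)
    (hE : ∀ i, ∀ x ∈ U, HasDerivAt (E i) (-(i + 1 : ℕ) * E (i + 1) x) x)
    (hAE : ∀ x ∈ U, A 1 x = A 0 x * E 0 x) (n : ℕ) :
    ∀ x ∈ U, (n + 1) * A (n + 1) x = ∑ p ∈ antidiagonal n, A p.1 x * E p.2 x := by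
  induction n with
  | zero => simpa using hAE
  | succ n ih =>
    intro x hx
    have hleft := (hA (n + 1) x hx).const_mul ((n : 𝕜) + 1)
    have hright := HasDerivAt.fun_sum fun p (_ : p ∈ antidiagonal n) ↦
      (hA p.1 x hx).mul (hE p.2 x hx)
    have hderiv := hleft.unique <| hright.congr_of_eventuallyEq <|
      (hU.eventually_mem hx).mono fun y hy ↦ ih y hy
    have hfst : ∑ p ∈ antidiagonal n, (p.1 + 1 : ℕ) * (A (p.1 + 1) x * E p.2 x) =
        ∑ q ∈ antidiagonal (n + 1), q.1 * (A q.1 x * E q.2 x) := by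
      simp [Finset.Nat.sum_antidiagonal_succ]
    have hsnd : ∑ p ∈ antidiagonal n, (p.2 + 1 : ℕ) * (A p.1 x * E (p.2 + 1) x) =
        ∑ q ∈ antidiagonal (n + 1), q.2 * (A q.1 x * E q.2 x) := by
      simp [Finset.Nat.sum_antidiagonal_succ']
    have hdegree : ∑ q ∈ antidiagonal (n + 1), q.1 * (A q.1 x * E q.2 x) +
        ∑ q ∈ antidiagonal (n + 1), q.2 * (A q.1 x * E q.2 x) =
        (n + 1) * ∑ q ∈ antidiagonal (n + 1), A q.1 x * E q.2 x := by
      rw [← sum_add_distrib, mul_sum]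
      refine sum_congr rfl fun q hq ↦ ?_
      rw [← add_mul, ← Nat.cast_add, mem_antidiagonal.1 hq, Nat.cast_succ]
    have hsplit : ∑ p ∈ antidiagonal n, (-(p.1 + 1 : ℕ) * A (p.1 + 1) x * E p.2 x +
        A p.1 x * (-(p.2 + 1 : ℕ) * E (p.2 + 1) x)) =
        -(∑ p ∈ antidiagonal n, (p.1 + 1 : ℕ) * (A (p.1 + 1) x * E p.2 x) +
          ∑ p ∈ antidiagonal n, (p.2 + 1 : ℕ) * (A p.1 x * E (p.2 + 1) x)) := by
      rw [← sum_add_distrib, ← sum_neg_distrib]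
      exact sum_congr rfl fun p _ ↦ by ring
    rw [hsplit, hfst, hsnd, hdegree] at hderiv
    refine mul_left_cancel₀ (Nat.cast_add_one_ne_zero n : (n : 𝕜) + 1 ≠ 0) ?_
    push_cast at hderiv ⊢
    linear_combination -hderiv

/-! ### Scaled central binomial coefficients -/

/-- The coefficients `C(2m, m) / 4ᵐ` of the power series of `1 / √(1 - t)`. -/
noncomputable def scaledCentralBinom (m : ℕ) : ℝ :=
  m.centralBinom / 4 ^ m

theorem scaledCentralBinom_zero : scaledCentralBinom 0 = 1 := by
  simp [scaledCentralBinom]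

theorem scaledCentralBinom_pos (m : ℕ) : 0 < scaledCentralBinom m := by
  have := m.centralBinom_pos
  unfold scaledCentralBinom
  positivity

theorem scaledCentralBinom_nonneg (m : ℕ) : 0 ≤ scaledCentralBinom m :=
  (scaledCentralBinom_pos m).le

theorem scaledCentralBinom_succ (m : ℕ) :
    scaledCentralBinom (m + 1) = (m + 1 / 2) / (m + 1) * scaledCentralBinom m := by
  have h : ((m : ℝ) + 1) * (m + 1).centralBinom = 2 * (2 * m + 1) * m.centralBinom := by
    exact_mod_cast m.succ_mul_centralBinom_succ
  rw [scaledCentralBinom, scaledCentralBinom, pow_succ]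
  field_simp
  linear_combination 2 * h

theorem scaledCentralBinom_sub_succ (m : ℕ) :
    scaledCentralBinom m - scaledCentralBinom (m + 1) = scaledCentralBinom m / (m + 1) / 2 := by
  rw [scaledCentralBinom_succ]
  field

theorem antitone_scaledCentralBinom : Antitone scaledCentralBinom :=
  antitone_nat_of_succ_le fun m ↦ by
    have := scaledCentralBinom_nonneg m
    rw [← sub_nonneg, scaledCentralBinom_sub_succ]
    positivity

theorem scaledCentralBinom_sq_mul_wallis (m : ℕ) :
    scaledCentralBinom m ^ 2 * (2 * m + 1) * Real.Wallis.W m = 1 := by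
  induction m with
  | zero => simp [scaledCentralBinom_zero, Real.Wallis.W]
  | succ m ih =>
    rw [Real.Wallis.W_succ, scaledCentralBinom_succ]
    refine Eq.trans ?_ ih
    push_cast
    field

theorem tendsto_scaledCentralBinom : Tendsto scaledCentralBinom atTop (𝓝 0) := by
  have hlin : Tendsto (fun m : ℕ ↦ 2 * (m : ℝ) + 1) atTop atTop :=
    tendsto_atTop_add_const_right _ _ (tendsto_natCast_atTop_atTop.const_mul_atTop two_pos)
  have hsq : Tendsto (fun m : ℕ ↦ ((2 * (m : ℝ) + 1) * Real.Wallis.W m)⁻¹) atTop (𝓝 0) :=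
    (hlin.atTop_mul_pos (by positivity) Real.Wallis.tendsto_W_nhds_pi_div_two).inv_tendsto_atTop
  have hinv (m : ℕ) : ((2 * (m : ℝ) + 1) * Real.Wallis.W m)⁻¹ = scaledCentralBinom m ^ 2 :=
    inv_eq_of_mul_eq_one_left (by linear_combination scaledCentralBinom_sq_mul_wallis m)
  simpa only [hinv, Real.sqrt_sq (scaledCentralBinom_nonneg _), Real.sqrt_zero] using hsq.sqrt

theorem hasSum_scaledCentralBinom_div_succ :
    HasSum (fun m : ℕ ↦ scaledCentralBinom m / ((m : ℝ) + 1)) 2 := by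
  have h := (hasSum_sub_succ_of_antitone antitone_scaledCentralBinom
    tendsto_scaledCentralBinom).mul_left 2
  simpa only [scaledCentralBinom_sub_succ, scaledCentralBinom_zero,
    mul_div_cancel₀ _ (two_ne_zero' ℝ), sub_zero, mul_one] using h

theorem summable_scaledCentralBinom_div_add_pow {k : ℕ} {x : ℝ} (hk : 1 ≤ k) (hx : 0 < x) :
    Summable fun m : ℕ ↦ scaledCentralBinom m / (m + x) ^ k :=
  summable_hurwitzSeries_of_le (by simpa using hasSum_scaledCentralBinom_div_succ.summable)
    one_pos hk hx

/-! ### The Beta function `B(x, 1/2)` as a Hurwitz series -/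

-- Expanding `1 / √(1 - t)` under the Beta integral gives `β 1 x = B(x, 1/2)`, and `β (k + 1)` is
-- `(-1)ᵏ / k!` times the `k`-th derivative of `β 1`.
local notation "β" => hurwitzSeries scaledCentralBinom

section Beta

variable {x : ℝ}

theorem beta_one_one : β 1 1 = 2 := by
  simpa only [hurwitzSeries, pow_one] using hasSum_scaledCentralBinom_div_succ.tsum_eq

theorem beta_pos {k : ℕ} (hk : 1 ≤ k) (hx : 0 < x) : 0 < β k x :=
  (summable_scaledCentralBinom_div_add_pow hk hx).tsum_pos
    (fun m ↦ div_nonneg (scaledCentralBinom_nonneg m) (by positivity)) 0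
    (div_pos (scaledCentralBinom_pos 0) (by positivity))

theorem mul_beta_one (hx : 0 < x) : x * β 1 x = (x + 1 / 2) * β 1 (x + 1) := by
  have hx1 : 0 < x + 1 := by positivity
  have htail : hurwitzSeries (fun m ↦ scaledCentralBinom (m + 1)) 1 (x + 1) =
      -(1 / (2 * x)) * β 1 1 + (x + 1 / 2) / x * β 1 (x + 1) := by
    have h1 := (summable_scaledCentralBinom_div_add_pow le_rfl one_pos).hasSum
    have hx' := (summable_scaledCentralBinom_div_add_pow le_rfl hx1).hasSum
    refine ((h1.mul_left _).add (hx'.mul_left _)).congr_fun (fun m ↦ ?_) |>.tsum_eq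
    have : 0 < m + (x + 1) := by positivity
    simp only [scaledCentralBinom_succ]
    field
  rw [hurwitzSeries_eq_zero_add (summable_scaledCentralBinom_div_add_pow le_rfl hx), htail,
    beta_one_one, scaledCentralBinom_zero]
  field

theorem hurwitzSeries_scaledCentralBinom_succ {k : ℕ} (hk : 1 ≤ k) :
    hurwitzSeries (fun m ↦ scaledCentralBinom (m + 1)) k 1 = β k 1 - β (k + 1) 1 / 2 := by
  have h := (summable_scaledCentralBinom_div_add_pow hk one_pos).hasSum
  have h' := (summable_scaledCentralBinom_div_add_pow (by lia : 1 ≤ k + 1) one_pos).hasSum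
  refine (h.sub (h'.div_const 2)).congr_fun (fun m ↦ ?_) |>.tsum_eq
  simp only [scaledCentralBinom_succ]
  field

theorem hasDerivAt_beta {k : ℕ} (hk : 1 ≤ k) (hx : 0 < x) :
    HasDerivAt (β k) (-k * β (k + 1) x) x :=
  hasDerivAt_hurwitzSeries (summable_scaledCentralBinom_div_add_pow hk one_pos) one_pos hx

theorem beta_two_div_beta_one_sub (hx : 0 < x) :
    β 2 x / β 1 x - β 2 (x + 1) / β 1 (x + 1) = 1 / x - 1 / (x + 1 / 2) := by
  have hx1 : 0 < x + 1 := by positivity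
  have hleft := (hasDerivAt_id x).mul (hasDerivAt_beta le_rfl hx)
  have hright := ((hasDerivAt_id x).add_const (1 / 2)).mul
    ((hasDerivAt_beta le_rfl hx1).comp_add_const x 1)
  have hderiv := hleft.unique <| hright.congr_of_eventuallyEq <|
    (eventually_gt_nhds hx).mono fun y hy ↦ mul_beta_one hy
  have hrec := mul_beta_one hx
  have hpos := beta_pos le_rfl hx
  have hpos1 := beta_pos le_rfl hx1
  have hval : β 1 (x + 1) = x * β 1 x / (x + 1 / 2) := by
    rw [hrec]
    field
  simp only [id, one_mul, Nat.cast_one, neg_mul, one_add_one_eq_two] at hderiv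
  rw [hval] at hderiv ⊢
  field_simp at hderiv ⊢
  linear_combination -hderiv

theorem beta_two (hx : 0 < x) : β 2 x = β 1 x * alternatingHurwitz 1 x := by
  let g : ℕ → ℝ := fun n ↦ β 2 (n + x) / β 1 (n + x)
  have hstep (n : ℕ) : g n - g (n + 1) = 1 / (n + x) - 1 / (n + (x + 1 / 2)) := by
    have hn : 0 < n + x := by positivity
    simpa only [g, Nat.cast_succ, add_right_comm, add_assoc] using beta_two_div_beta_one_sub hn
  have hanti : Antitone g := antitone_nat_of_succ_le fun n ↦ by
    rw [← sub_nonneg, hstep, sub_nonneg]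
    gcongr
    norm_num
  have hlim : Tendsto g atTop (𝓝 0) := by
    refine squeeze_zero (fun n ↦ ?_) (fun n ↦ ?_)
      (by simpa using tendsto_one_div_nat_add_pow one_ne_zero x)
    · have hn : 0 < n + x := by positivity
      exact (div_pos (beta_pos one_le_two hn) (beta_pos le_rfl hn)).le
    · have hn : 0 < n + x := by positivity
      rw [div_le_iff₀ (beta_pos le_rfl hn), inv_mul_eq_div]
      exact hurwitzSeries_succ_le_div scaledCentralBinom_nonneg
        (summable_scaledCentralBinom_div_add_pow le_rfl hn) hn
  have hsum : alternatingHurwitz 1 x = β 2 x / β 1 x := by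
    have h := (hasSum_sub_succ_of_antitone hanti hlim).tsum_eq
    simpa only [hstep, alternatingHurwitz, pow_one, g, Nat.cast_zero, zero_add, sub_zero] using h
  rw [hsum, mul_div_cancel₀ _ (beta_pos le_rfl hx).ne']

theorem succ_mul_beta (n : ℕ) (hx : 0 < x) :
    (n + 1) * β (n + 2) x =
      ∑ p ∈ antidiagonal n, β (p.1 + 1) x * alternatingHurwitz (p.2 + 1) x :=
  succ_mul_eq_sum_antidiagonal_of_hasDerivAt (A := fun i ↦ β (i + 1))
    (E := fun i ↦ alternatingHurwitz (i + 1)) isOpen_Ioi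
    (fun i _ hy ↦ hasDerivAt_beta i.succ_pos hy)
    (fun i _ hy ↦ hasDerivAt_alternatingHurwitz i.succ_ne_zero hy)
    (fun _ hy ↦ beta_two hy) n x hx

/-! ### Special values -/

theorem alternatingHurwitz_one_one : alternatingHurwitz 1 1 = 2 - 2 * Real.log 2 := by
  have h := alternatingHurwitz_add_alternatingHurwitz_add_half one_ne_zero one_half_pos
  rw [add_halves, alternatingHurwitz_one_one_half] at h
  linear_combination h

theorem alternatingHurwitz_one_right {k : ℕ} (hk : 2 ≤ k) :
    alternatingHurwitz k 1 = 2 ^ k - (2 ^ k - 2) * hurwitzSeries 1 k 1 := by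
  have h := alternatingHurwitz_add_alternatingHurwitz_add_half (k := k) (by lia) one_half_pos
  rw [add_halves, alternatingHurwitz_one_half_right hk, one_div_pow, one_div_one_div] at h
  linear_combination h

theorem beta_two_one : β 2 1 = 4 - 4 * Real.log 2 := by
  rw [beta_two one_pos, beta_one_one, alternatingHurwitz_one_one]
  ring

theorem hurwitzSeries_scaledCentralBinom_succ_one :
    hurwitzSeries (fun m ↦ scaledCentralBinom (m + 1)) 1 1 = 2 * Real.log 2 := by
  rw [hurwitzSeries_scaledCentralBinom_succ le_rfl, beta_one_one, beta_two_one]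
  ring

theorem hurwitzSeries_scaledCentralBinom_succ_three :
    hurwitzSeries (fun m ↦ scaledCentralBinom (m + 1)) 3 1 =
      2 * hurwitzSeries 1 3 1 - 2 * Real.log 2 * hurwitzSeries 1 2 1 +
        4 / 3 * Real.log 2 ^ 3 := by
  have hbeta3 := succ_mul_beta 1 one_pos
  have hbeta4 := succ_mul_beta 2 one_pos
  simp only [Finset.Nat.sum_antidiagonal_succ, Finset.Nat.antidiagonal_zero, sum_singleton,
    zero_add, Nat.reduceAdd, alternatingHurwitz_one_one, alternatingHurwitz_one_right le_rfl,
    alternatingHurwitz_one_right (by norm_num : 2 ≤ 3), beta_one_one, beta_two_one] at hbeta3 hbeta4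
  rw [hurwitzSeries_scaledCentralBinom_succ (by norm_num)]
  push_cast at hbeta3 hbeta4
  linear_combination (2 / 3 + Real.log 2 / 3) * hbeta3 / 2 - hbeta4 / 6

theorem beta_one_nat_add_one (n : ℕ) :
    β 1 (n + 1) = 1 / ((n + 1 / 2) * scaledCentralBinom n) := by
  induction n with
  | zero => norm_num [beta_one_one, scaledCentralBinom_zero]
  | succ n ih =>
    have hn := scaledCentralBinom_pos n
    have h := mul_beta_one (by positivity : (0 : ℝ) < n + 1)
    rw [ih] at h
    rw [scaledCentralBinom_succ]
    push_cast
    field_simp at h ⊢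
    linear_combination -h

theorem beta_one_nat_add_half (n : ℕ) :
    β 1 (n + 1 / 2) = scaledCentralBinom n * β 1 (1 / 2) := by
  induction n with
  | zero => simp [scaledCentralBinom_zero]
  | succ n ih =>
    have h := mul_beta_one (by positivity : (0 : ℝ) < n + 1 / 2)
    rw [ih, add_assoc, add_halves, add_right_comm] at h
    rw [scaledCentralBinom_succ, Nat.cast_succ]
    field_simp at h ⊢
    linear_combination -h

theorem beta_one_le_of_le {y : ℝ} (hx : 0 < x) (hxy : x ≤ y) : β 1 y ≤ β 1 x :=
  hurwitzSeries_le_of_le scaledCentralBinom_nonneg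
    (summable_scaledCentralBinom_div_add_pow le_rfl hx) hx hxy

theorem beta_one_one_half : β 1 (1 / 2) = Real.pi := by
  have hW (n : ℕ) : Real.Wallis.W n = 1 / (scaledCentralBinom n ^ 2 * (2 * n + 1)) :=
    eq_one_div_of_mul_eq_one_right (scaledCentralBinom_sq_mul_wallis n)
  have hlower (n : ℕ) : 2 * Real.Wallis.W n ≤ β 1 (1 / 2) := by
    have ha := scaledCentralBinom_pos n
    have h := beta_one_le_of_le (x := n + 1 / 2) (y := n + 1) (by positivity) (by gcongr; norm_num)
    rw [beta_one_nat_add_one, beta_one_nat_add_half, ← div_le_iff₀' ha] at h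
    refine le_of_eq_of_le ?_ h
    rw [hW]
    field
  have hupper (n : ℕ) : β 1 (1 / 2) ≤ (1 + (1 / 2) / (n + 1 / 2)) * (2 * Real.Wallis.W n) := by
    have ha := scaledCentralBinom_pos n
    have h := beta_one_le_of_le (x := n + 1) (y := (n + 1 : ℕ) + 1 / 2) (by positivity)
      (by push_cast; linarith)
    rw [beta_one_nat_add_one, beta_one_nat_add_half, ← le_div_iff₀' (scaledCentralBinom_pos _)] at h
    refine h.trans_eq ?_
    rw [hW, scaledCentralBinom_succ]
    field
  have hlim : Tendsto (fun n ↦ 2 * Real.Wallis.W n) atTop (𝓝 Real.pi) := by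
    simpa only [mul_div_cancel₀ _ (two_ne_zero' ℝ)] using
      Real.Wallis.tendsto_W_nhds_pi_div_two.const_mul 2
  have hfactor : Tendsto (fun n : ℕ ↦ 1 + (1 / 2 : ℝ) / (n + 1 / 2)) atTop (𝓝 1) := by
    simpa [div_eq_mul_inv] using
      ((tendsto_one_div_nat_add_pow one_ne_zero (1 / 2)).const_mul (1 / 2 : ℝ)).const_add (1 : ℝ)
  exact le_antisymm (ge_of_tendsto' (by simpa using hfactor.mul hlim) hupper)
    (le_of_tendsto' hlim hlower)

theorem beta_two_one_half : β 2 (1 / 2) = 2 * Real.pi * Real.log 2 := by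
  rw [beta_two one_half_pos, beta_one_one_half, alternatingHurwitz_one_one_half]
  ring

theorem hurwitzSeries_one_two_one : hurwitzSeries 1 2 1 = Real.pi ^ 2 / 6 := by
  have h := (hasSum_nat_add_iff' 1).2 hasSum_zeta_two
  simpa [hurwitzSeries] using h.tsum_eq

theorem ofReal_hurwitzSeries_one_one_eq_riemannZeta {k : ℕ} (hk : 1 < k) :
    (hurwitzSeries 1 k 1 : ℂ) = riemannZeta k := by
  have hsum := Real.summable_one_div_nat_pow.2 hk
  have h : hurwitzSeries 1 k 1 = ∑' n : ℕ, 1 / (n : ℝ) ^ k := by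
    rw [hsum.tsum_eq_zero_add]
    simp [hurwitzSeries, (by lia : k ≠ 0)]
  rw [h, zeta_nat_eq_tsum_of_gt_one hk]
  push_cast
  rfl

/-! ### The two series -/

theorem eulerSum_scaledCentralBinom_one_half :
    eulerSum scaledCentralBinom (1 / 2) =
      7 * hurwitzSeries 1 3 1 - 6 * Real.log 2 * hurwitzSeries 1 2 1 := by
  have hbeta : HasSum (fun j : ℕ ↦ β 1 (j + 1 / 2) / ((j : ℝ) + 1 / 2) ^ 2)
      (Real.pi * β 2 (1 / 2)) := by
    refine ((summable_scaledCentralBinom_div_add_pow one_le_two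
      one_half_pos).hasSum.mul_left Real.pi).congr_fun fun j ↦ ?_
    rw [beta_one_nat_add_half, beta_one_one_half]
    ring
  have h := hbeta.unique (hasSum_hurwitzSeries_div_sq scaledCentralBinom_nonneg
    hasSum_scaledCentralBinom_div_succ.summable one_half_pos)
  rw [beta_two_one_half, scaledCentralBinom_zero, hurwitzSeries_scaledCentralBinom_succ_one,
    hurwitzSeries_one_one_half le_rfl, hurwitzSeries_one_one_half (by norm_num)] at h
  linear_combination h + 12 * Real.log 2 * hurwitzSeries_one_two_one

theorem hasSum_inv_centralBinom_div_cube :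
    HasSum (fun n : ℕ ↦ (4 : ℝ) ^ n / (((n : ℝ) + 1) ^ 3 * (n + 1).centralBinom))
      ((hurwitzSeries 1 3 1 + 2 * Real.log 2 * hurwitzSeries 1 2 1 -
        eulerSum scaledCentralBinom 1) / 4) := by
  have h := (hasSum_hurwitzSeries_div_sq scaledCentralBinom_nonneg
    hasSum_scaledCentralBinom_div_succ.summable one_pos).div_const 4
  rw [scaledCentralBinom_zero, hurwitzSeries_scaledCentralBinom_succ_one, one_mul, ← add_sub_assoc,
    mul_comm (hurwitzSeries 1 2 1)] at h
  have hterm (n : ℕ) : (4 : ℝ) ^ n / (((n : ℝ) + 1) ^ 3 * (n + 1).centralBinom) =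
      β 1 (n + 1) / ((n : ℝ) + 1) ^ 2 / 4 := by
    have hvalue : β 1 (n + 1) = 1 / ((n + 1) * scaledCentralBinom (n + 1)) := by
      rw [beta_one_nat_add_one, scaledCentralBinom_succ]
      field
    rw [hvalue, scaledCentralBinom, pow_succ]
    field
  simpa only [hterm] using h

theorem hasSum_centralBinom_div_cube_mul_harmonic :
    HasSum (fun n : ℕ ↦ ((n + 1).centralBinom : ℝ) / ((4 : ℝ) ^ (n + 1) * ((n : ℝ) + 1) ^ 3) *
        (3 + 2 * ((n : ℝ) + 1) * ((harmonic n : ℝ) - (harmonic (2 * n + 1) : ℝ))))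
      (2 * hurwitzSeries (fun m ↦ scaledCentralBinom (m + 1)) 3 1 + eulerSum scaledCentralBinom 1 -
        eulerSum scaledCentralBinom (1 / 2)) := by
  have hsum := hasSum_scaledCentralBinom_div_succ.summable
  have hcube : Summable fun m : ℕ ↦ scaledCentralBinom (m + 1) / ((m : ℝ) + 1) ^ 3 :=
    summable_hurwitzSeries_of_le (by simpa using summable_succ_div_add_one hsum) one_pos
      (by norm_num : 1 ≤ 3) one_pos
  have hone := (summable_eulerSum scaledCentralBinom_nonneg hsum one_pos).hasSum
  have hhalf := (summable_eulerSum scaledCentralBinom_nonneg hsum one_half_pos).hasSum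
  refine (((hcube.hasSum.mul_left 2).add hone).sub hhalf).congr_fun fun n ↦ ?_
  rw [shiftedHarmonic_one, shiftedHarmonic_one_half, mul_add_one 2 n, harmonic_succ n,
    harmonic_succ (2 * n + 1), scaledCentralBinom]
  push_cast
  field

end Beta

/-- 2·∑_{n=1}^∞ 4^{n-1}/(n³·C(2n,n)) = -ζ(3) + (1/3)·π²·log 2 + (4/3)·log³2
- (1/2)·∑_{n=1}^∞ (C(2n,n)/(4ⁿ·n³))·(3 + 2n(H_{n-1} - H_{2n-1})), both series converging. -/
theorem inverse_centralBinom_ncube_identity :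
    Summable (fun n : ℕ =>
      (4 : ℝ) ^ n / (((n : ℝ) + 1) ^ 3 * (Nat.centralBinom (n + 1) : ℝ))) ∧
    Summable (fun n : ℕ =>
      (Nat.centralBinom (n + 1) : ℝ) / ((4 : ℝ) ^ (n + 1) * ((n : ℝ) + 1) ^ 3) *
        (3 + 2 * ((n : ℝ) + 1) * ((harmonic n : ℝ) - (harmonic (2 * n + 1) : ℝ)))) ∧
    ((2 * ∑' n : ℕ,
        (4 : ℝ) ^ n / (((n : ℝ) + 1) ^ 3 * (Nat.centralBinom (n + 1) : ℝ)) : ℝ) : ℂ) =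
      -riemannZeta 3 + (1 / 3) * (Real.pi : ℂ) ^ 2 * (Real.log 2 : ℂ)
        + (4 / 3) * (Real.log 2 : ℂ) ^ 3
        - (1 / 2) * ((∑' n : ℕ,
            (Nat.centralBinom (n + 1) : ℝ) / ((4 : ℝ) ^ (n + 1) * ((n : ℝ) + 1) ^ 3) *
              (3 + 2 * ((n : ℝ) + 1) *
                ((harmonic n : ℝ) - (harmonic (2 * n + 1) : ℝ))) : ℝ) : ℂ) := by
  have hzeta : (hurwitzSeries 1 3 1 : ℂ) = riemannZeta 3 := by
    exact_mod_cast ofReal_hurwitzSeries_one_one_eq_riemannZeta (by norm_num : 1 < 3)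
  refine ⟨hasSum_inv_centralBinom_div_cube.summable,
    hasSum_centralBinom_div_cube_mul_harmonic.summable, ?_⟩
  rw [hasSum_inv_centralBinom_div_cube.tsum_eq, hasSum_centralBinom_div_cube_mul_harmonic.tsum_eq,
    eulerSum_scaledCentralBinom_one_half, hurwitzSeries_scaledCentralBinom_succ_three,
    hurwitzSeries_one_two_one, ← hzeta]
  push_cast
  ring
end

section
/- 2·∑_{n=1}^∞ (-1)^{n-1}·4^{n-1} / (n² · C(2n,n)) = log²2 - (∑_{n=1}^∞ (-1)ⁿ·C(2n,n)/(4ⁿ · n))·log 2 + (1/2)·∑_{n=1}^∞ ((-1)^{n+1}·C(2n,n)/(4ⁿ · n²))·(2 + 2n(H_{n-1} - H_{2n-1})), where all three series converge. -/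
/-!
Write `uₙ = C(2n, n) / 4ⁿ`, `L t = log (2 / (1 + √(1 - t)))` and `dₙ = H₂ₙ - Hₙ`. For `|t| < 1`
and `|x| < 1` the three series are values of the generating functions

* `∑ (uₙ / n) tⁿ = 2 L t`,
* `∑ (uₙ / n) (dₙ - 1 / (2n)) tⁿ = (L t)²`,
* `∑ (1 / (n² uₙ)) (-x²)ⁿ = -2 (arsinh x)²`,

where division by zero makes the terms at `n = 0` vanish. Each formula follows by comparing
derivatives, the recurrences of the coefficients being first-order linear differential equations for
the series. The coefficients are summable, so by Abel's theorem the formulas persist at `t = -1` and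
`x = 1`. Since `arsinh 1 = log 2 - L (-1)`, the identity is the expansion of `(log 2 - L (-1))²`.
-/

open Filter Finset Real Set Topology

section PowerSeries

variable {𝕜 : Type*} [RCLike 𝕜] {a : ℕ → 𝕜} {r : ℝ} {z : 𝕜}

theorem eq_of_hasDerivAt_eq_of_norm_lt {f g f' : 𝕜 → 𝕜}
    (hf : ∀ w, ‖w‖ < r → HasDerivAt f (f' w) w) (hg : ∀ w, ‖w‖ < r → HasDerivAt g (f' w) w)
    (h₀ : f 0 = g 0) (hz : ‖z‖ < r) : f z = g z := by
  have mem {w : 𝕜} : w ∈ Metric.ball 0 r ↔ ‖w‖ < r := mem_ball_zero_iff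
  refine Metric.isOpen_ball.eqOn_of_deriv_eq Metric.isPreconnected_ball
    (fun w hw => (hf w (mem.1 hw)).differentiableAt.differentiableWithinAt)
    (fun w hw => (hg w (mem.1 hw)).differentiableAt.differentiableWithinAt)
    (fun w hw => ?_) (mem.2 (norm_zero.trans_lt ((norm_nonneg z).trans_lt hz))) h₀ (mem.2 hz)
  rw [(hf w (mem.1 hw)).deriv, (hg w (mem.1 hw)).deriv]

theorem summable_mul_pow_of_summable_deriv
    (ha : Summable fun n => (n + 1) * a (n + 1) * z ^ n) : Summable fun n => a n * z ^ n := by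
  refine (summable_nat_add_iff 1).1 (.of_norm_bounded (ha.norm.mul_right ‖z‖) fun n => ?_)
  have one_le : 1 ≤ ‖(n + 1 : 𝕜)‖ := by
    rw [← Nat.cast_succ, RCLike.norm_natCast]
    exact_mod_cast n.succ_pos
  calc ‖a (n + 1) * z ^ (n + 1)‖ ≤ ‖(n + 1 : 𝕜)‖ * ‖a (n + 1) * z ^ (n + 1)‖ :=
        le_mul_of_one_le_left (norm_nonneg _) one_le
    _ = ‖(n + 1) * a (n + 1) * z ^ n‖ * ‖z‖ := by
        simp only [← norm_mul]
        ring_nf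

theorem hasDerivAt_tsum_mul_pow
    (ha : ∀ w : 𝕜, ‖w‖ < r → Summable fun n => (n + 1) * a (n + 1) * w ^ n) (hz : ‖z‖ < r) :
    HasDerivAt (fun w => ∑' n, a n * w ^ n) (∑' n, (n + 1) * a (n + 1) * z ^ n) z := by
  obtain ⟨q, hzq, hqr⟩ := exists_between hz
  have norm_q : ‖(q : 𝕜)‖ = q := RCLike.norm_of_nonneg ((norm_nonneg z).trans hzq.le)
  have bound : Summable fun n => ‖a n * (n * (q : 𝕜) ^ (n - 1))‖ :=
    (summable_nat_add_iff 1).1 <| (ha q (norm_q.trans_lt hqr)).norm.congr fun n => by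
      push_cast [Nat.add_sub_cancel]
      ring_nf
  have term_le (n : ℕ) {w : 𝕜} (hw : w ∈ Metric.ball 0 q) :
      ‖a n * (n * w ^ (n - 1))‖ ≤ ‖a n * (n * (q : 𝕜) ^ (n - 1))‖ := by
    simp only [norm_mul, norm_pow, norm_q]
    gcongr
    exact (mem_ball_zero_iff.1 hw).le
  have z_mem : z ∈ Metric.ball 0 q := mem_ball_zero_iff.2 hzq
  refine (hasDerivAt_tsum_of_isPreconnected bound Metric.isOpen_ball Metric.isPreconnected_ball
    (fun n w _ => (hasDerivAt_pow n w).const_mul (a n)) (fun n _ => term_le n) z_mem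
    (summable_mul_pow_of_summable_deriv (ha z hz)) z_mem).congr_deriv ?_
  rw [(Summable.of_norm_bounded bound fun n => term_le n z_mem).tsum_eq_zero_add]
  simp only [CharP.cast_eq_zero, zero_mul, mul_zero, zero_add, Nat.add_sub_cancel, Nat.cast_succ]
  exact tsum_congr fun n => by ring

theorem hasSum_mul_pow_of_hasDerivAt {F F' : 𝕜 → 𝕜}
    (hsum : ∀ w, ‖w‖ < r → HasSum (fun n => (n + 1) * a (n + 1) * w ^ n) (F' w))
    (hF : ∀ w, ‖w‖ < r → HasDerivAt F (F' w) w) (h₀ : F 0 = a 0) (hz : ‖z‖ < r) :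
    HasSum (fun n => a n * z ^ n) (F z) := by
  have tsum_eq : ∑' n, a n * z ^ n = F z := by
    refine eq_of_hasDerivAt_eq_of_norm_lt (f := fun w => ∑' n, a n * w ^ n)
      (fun w hw => ?_) hF ?_ hz
    · rw [← (hsum w hw).tsum_eq]
      exact hasDerivAt_tsum_mul_pow (fun w hw => (hsum w hw).summable) hw
    · rw [h₀, tsum_eq_single 0 fun n hn => by simp [hn]]
      simp
  exact tsum_eq ▸ (summable_mul_pow_of_summable_deriv (hsum z hz).summable).hasSum

theorem summable_succ_mul_mul_pow_of_bounded {C : ℝ} (ha : ∀ n, ‖a n‖ ≤ C) (hz : ‖z‖ < 1) :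
    Summable fun n => (n + 1) * a (n + 1) * z ^ n := by
  have majorant : Summable fun n : ℕ => ((n : ℝ) ^ 1 * ‖z‖ ^ n + ‖z‖ ^ n) * C := by
    refine Summable.mul_right C (Summable.add (summable_pow_mul_geometric_of_norm_lt_one 1 ?_)
      (summable_geometric_of_lt_one (norm_nonneg z) hz))
    rwa [norm_norm]
  refine .of_norm_bounded majorant fun n => ?_
  calc ‖(n + 1) * a (n + 1) * z ^ n‖ = (n + 1) * ‖a (n + 1)‖ * ‖z‖ ^ n := by
        rw [norm_mul, norm_mul, norm_pow, ← Nat.cast_succ, RCLike.norm_natCast, Nat.cast_succ]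
    _ ≤ (n + 1) * C * ‖z‖ ^ n := by
        gcongr
        exact ha _
    _ = ((n : ℝ) ^ 1 * ‖z‖ ^ n + ‖z‖ ^ n) * C := by ring

theorem hasDerivAt_tsum_mul_pow_of_recurrence {b : ℕ → 𝕜} {α B : 𝕜}
    (ha : ∀ w : 𝕜, ‖w‖ < 1 → Summable fun n => (n + 1) * a (n + 1) * w ^ n)
    (hab : ∀ n : ℕ, (n + 1) * a (n + 1) = (n + α) * a n + b n) (hz : ‖z‖ < 1)
    (hB : HasSum (fun n => b n * z ^ n) B) :
    HasDerivAt (fun w => ∑' n, a n * w ^ n) ((α * ∑' n, a n * z ^ n + B) / (1 - z)) z := by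
  refine (hasDerivAt_tsum_mul_pow ha hz).congr_deriv ?_
  have sum_deriv := (ha z hz).hasSum
  have sum_euler : HasSum (fun n : ℕ => n * a n * z ^ n)
      (z * ∑' n, (n + 1) * a (n + 1) * z ^ n) := by
    rw [← hasSum_nat_add_iff' 1, sum_range_one, Nat.cast_zero, zero_mul, zero_mul, sub_zero]
    refine (sum_deriv.mul_left z).congr_fun fun n => ?_
    push_cast
    ring
  have sum_a := (summable_mul_pow_of_summable_deriv (ha z hz)).hasSum
  have ode := sum_deriv.unique <| ((sum_euler.add (sum_a.mul_left α)).add hB).congr_fun fun n => by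
    rw [hab]
    ring
  have one_sub_ne : 1 - z ≠ 0 := sub_ne_zero.2 (by rintro rfl; simp at hz)
  rw [eq_div_iff one_sub_ne]
  linear_combination ode

theorem hasSum_succ_mul_pow {s : 𝕜} (h : HasSum (fun n => a n * z ^ n) (a 0 + z * s))
    (h₀ : z = 0 → s = a 1) : HasSum (fun n => a (n + 1) * z ^ n) s := by
  rcases eq_or_ne z 0 with rfl | hz
  · rw [h₀ rfl]
    simpa using hasSum_single (f := fun n => a (n + 1) * (0 : 𝕜) ^ n) 0 fun n hn => by simp [hn]
  · have tail := (hasSum_nat_add_iff' 1).2 h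
    rw [sum_range_one, pow_zero, mul_one, add_sub_cancel_left] at tail
    refine (hasSum_mul_left_iff hz).1 (tail.congr_fun fun n => ?_)
    ring

end PowerSeries

theorem hasSum_of_hasSum_mul_pow {a : ℕ → ℝ} {F : ℝ → ℝ} (ha : Summable a)
    (hF : ContinuousWithinAt F (Iio 1) 1)
    (h : ∀ t ∈ Ioo (0 : ℝ) 1, HasSum (fun n => a n * t ^ n) (F t)) : HasSum a (F 1) := by
  have abel := Real.tendsto_tsum_powerSeries_nhdsWithin_lt ha.hasSum.tendsto_sum_nat
  have tsum_eq : (fun t => ∑' n, a n * t ^ n) =ᶠ[𝓝[<] 1] F := by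
    filter_upwards [Ioo_mem_nhdsLT one_pos] with t ht using (h t ht).tsum_eq
  exact tendsto_nhds_unique (abel.congr' tsum_eq) hF ▸ ha.hasSum

theorem summable_sub_succ_of_antitone {f : ℕ → ℝ} (hf : Antitone f) (h₀ : ∀ n, 0 ≤ f n) :
    Summable fun n => f n - f (n + 1) := by
  refine summable_of_sum_range_le (c := f 0) (fun n => sub_nonneg.2 (hf n.le_succ)) fun n => ?_
  rw [sum_range_sub']
  exact sub_le_self _ (h₀ n)

/-- The ratio `C(2n, n) / 4ⁿ = (2n - 1)‼ / (2n)‼`, the Taylor coefficients of `1 / √(1 - t)`. -/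
noncomputable def wallisRatio (n : ℕ) : ℝ := n.centralBinom / 4 ^ n

theorem wallisRatio_zero : wallisRatio 0 = 1 := by simp [wallisRatio]

theorem wallisRatio_pos (n : ℕ) : 0 < wallisRatio n :=
  div_pos (Nat.cast_pos.2 n.centralBinom_pos) (by positivity)

theorem wallisRatio_le_one (n : ℕ) : wallisRatio n ≤ 1 :=
  div_le_one_of_le₀ (mod_cast n.centralBinom_le_four_pow) (by positivity)

theorem succ_mul_wallisRatio_succ (n : ℕ) :
    (n + 1) * wallisRatio (n + 1) = (n + 1 / 2) * wallisRatio n := by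
  have recurrence : ((n : ℝ) + 1) * (n + 1).centralBinom = 2 * (2 * n + 1) * n.centralBinom := by
    exact_mod_cast n.succ_mul_centralBinom_succ
  simp only [wallisRatio, pow_succ]
  field_simp
  linear_combination 2 * recurrence

theorem wallisRatio_div_succ (n : ℕ) :
    wallisRatio n / (n + 1) = 2 * (wallisRatio n - wallisRatio (n + 1)) := by
  rw [div_eq_iff (by positivity)]
  linear_combination 2 * succ_mul_wallisRatio_succ n

theorem wallisRatio_antitone : Antitone wallisRatio := by
  refine antitone_nat_of_succ_le fun n => ?_
  have gap_nonneg : 0 ≤ wallisRatio n / (n + 1) := div_nonneg (wallisRatio_pos n).le (by positivity)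
  linarith [wallisRatio_div_succ n]

theorem summable_wallisRatio_div : Summable fun n : ℕ => wallisRatio n / n := by
  have telescoping : Summable fun n : ℕ => wallisRatio n / (n + 1) :=
    ((summable_sub_succ_of_antitone wallisRatio_antitone fun n => (wallisRatio_pos n).le).mul_left
      2).congr fun n => (wallisRatio_div_succ n).symm
  refine (summable_nat_add_iff 1).1 (.of_nonneg_of_le (fun n => ?_) (fun n => ?_) telescoping)
  · exact div_nonneg (wallisRatio_pos _).le (Nat.cast_nonneg _)
  · rw [Nat.cast_succ]
    gcongr
    exact wallisRatio_antitone n.le_succ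

/-- The ratio `(2n)‼ / (2n + 1)‼`, up to sign the Taylor coefficients of `arsinh x / √(1 + x ^ 2)`
in odd degrees. -/
noncomputable def oddWallisRatio (n : ℕ) : ℝ := 1 / ((2 * n + 1) * wallisRatio n)

theorem oddWallisRatio_zero : oddWallisRatio 0 = 1 := by
  simp [oddWallisRatio, wallisRatio_zero]

theorem oddWallisRatio_pos (n : ℕ) : 0 < oddWallisRatio n :=
  one_div_pos.2 (mul_pos (by positivity) (wallisRatio_pos n))

theorem oddWallisRatio_succ (n : ℕ) :
    (2 * n + 3) * oddWallisRatio (n + 1) = (2 * n + 2) * oddWallisRatio n := by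
  have := wallisRatio_pos n
  have := wallisRatio_pos (n + 1)
  simp only [oddWallisRatio]
  push_cast
  field_simp
  linear_combination (-2 * (2 * n + 3) : ℝ) * succ_mul_wallisRatio_succ n

theorem oddWallisRatio_sub_succ (n : ℕ) :
    oddWallisRatio n - oddWallisRatio (n + 1) = oddWallisRatio n / (2 * n + 3) := by
  rw [eq_div_iff (by positivity)]
  linear_combination -oddWallisRatio_succ n

theorem oddWallisRatio_antitone : Antitone oddWallisRatio := by
  refine antitone_nat_of_succ_le fun n => sub_nonneg.1 ?_
  rw [oddWallisRatio_sub_succ]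
  exact div_nonneg (oddWallisRatio_pos n).le (by positivity)

theorem norm_oddWallisRatio_le_one (n : ℕ) : ‖oddWallisRatio n‖ ≤ 1 := by
  rw [norm_of_nonneg (oddWallisRatio_pos n).le]
  exact (oddWallisRatio_antitone n.zero_le).trans_eq oddWallisRatio_zero

theorem succ_mul_one_div_sq_mul_wallisRatio_succ (n : ℕ) :
    (n + 1) * (1 / (((n + 1 : ℕ) : ℝ) ^ 2 * wallisRatio (n + 1))) = 2 * oddWallisRatio n := by
  have := wallisRatio_pos n
  have := wallisRatio_pos (n + 1)
  simp only [oddWallisRatio]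
  push_cast
  field_simp
  linear_combination (-2 : ℝ) * succ_mul_wallisRatio_succ n

theorem summable_one_div_sq_mul_wallisRatio :
    Summable fun n : ℕ => 1 / ((n : ℝ) ^ 2 * wallisRatio n) := by
  have telescoping := (summable_sub_succ_of_antitone oddWallisRatio_antitone fun n =>
    (oddWallisRatio_pos n).le).mul_left 6
  have term_nonneg (n : ℕ) : 0 ≤ 1 / ((n : ℝ) ^ 2 * wallisRatio n) :=
    one_div_nonneg.2 (mul_nonneg (sq_nonneg _) (wallisRatio_pos n).le)
  refine (summable_nat_add_iff 1).1 (.of_nonneg_of_le (fun n => term_nonneg _) (fun n => ?_)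
    telescoping)
  rw [oddWallisRatio_sub_succ, ← mul_div_assoc, le_div_iff₀ (by positivity)]
  linarith [succ_mul_one_div_sq_mul_wallisRatio_succ n,
    mul_nonneg (Nat.cast_nonneg (α := ℝ) n) (term_nonneg (n + 1))]

/-- The difference `H₂ₙ - Hₙ`, the factor by which the Taylor coefficients of
`log (2 / (1 + √(1 - t))) / √(1 - t)` differ from those of `1 / √(1 - t)`. -/
noncomputable def harmonicGap (n : ℕ) : ℝ := harmonic (2 * n) - harmonic n

theorem harmonicGap_zero : harmonicGap 0 = 0 := by simp [harmonicGap]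

theorem harmonicGap_succ (n : ℕ) :
    harmonicGap (n + 1) = harmonicGap n + 1 / ((2 * n + 1) * (2 * n + 2)) := by
  simp only [harmonicGap, show 2 * (n + 1) = 2 * n + 1 + 1 by ring, harmonic_succ]
  push_cast
  field_simp
  ring

theorem harmonicGap_nonneg (n : ℕ) : 0 ≤ harmonicGap n := by
  induction n with
  | zero => rw [harmonicGap_zero]
  | succ n ih =>
    rw [harmonicGap_succ]
    positivity

theorem harmonicGap_le_one (n : ℕ) : harmonicGap n ≤ 1 := by
  suffices harmonicGap n ≤ 1 - 1 / (n + 1) from this.trans (sub_le_self _ (by positivity))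
  induction n with
  | zero => simp [harmonicGap_zero]
  | succ n ih =>
    have step : (1 : ℝ) / ((2 * n + 1) * (2 * n + 2)) ≤ 1 / (n + 1) - 1 / (n + 1 + 1) := by
      rw [div_sub_div _ _ (by positivity) (by positivity),
        div_le_div_iff₀ (by positivity) (by positivity)]
      nlinarith
    rw [harmonicGap_succ]
    push_cast
    linarith

theorem wallisRatio_eq_multichoose (n : ℕ) : wallisRatio n = Ring.multichoose (1 / 2 : ℝ) n := by
  have pochhammer (k : ℕ) :
      k.factorial * Ring.multichoose (1 / 2 : ℝ) k = (ascPochhammer ℝ k).eval (1 / 2) := by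
    rw [← nsmul_eq_mul, Ring.factorial_nsmul_multichoose_eq_ascPochhammer,
      Polynomial.ascPochhammer_smeval_eq_eval]
  refine mul_left_cancel₀ (Nat.cast_ne_zero.2 n.factorial_ne_zero) (.trans ?_ (pochhammer n).symm)
  induction n with
  | zero => simp [wallisRatio_zero]
  | succ n ih =>
    rw [ascPochhammer_succ_eval, ← ih, Nat.factorial_succ]
    push_cast
    linear_combination (n.factorial : ℝ) * succ_mul_wallisRatio_succ n

section GeneratingFunctions

variable {t : ℝ}

theorem hasSum_wallisRatio (ht : |t| < 1) :
    HasSum (fun n => wallisRatio n * t ^ n) (1 / √(1 - t)) := by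
  have mem : t ∈ Metric.eball 0 1 := by simpa [enorm_eq_nnnorm, ← NNReal.coe_lt_one] using ht
  have binomial := (Real.one_div_one_sub_rpow_hasFPowerSeriesOnBall_zero (1 / 2)).hasSum mem
  simp only [zero_add, ← Real.sqrt_eq_rpow] at binomial
  refine binomial.congr_fun fun n => ?_
  simp [wallisRatio_eq_multichoose, Ring.multichoose_eq, mul_comm]

theorem hasSum_wallisRatio_succ (ht : |t| < 1) :
    HasSum (fun n => wallisRatio (n + 1) * t ^ n) (1 / (√(1 - t) * (1 + √(1 - t)))) := by
  have one_sub_pos : 0 < 1 - t := sub_pos.2 (lt_of_abs_lt ht)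
  refine hasSum_succ_mul_pow ?_ fun h => ?_
  · have value : wallisRatio 0 + t * (1 / (√(1 - t) * (1 + √(1 - t)))) = 1 / √(1 - t) := by
      have := Real.sqrt_pos.2 one_sub_pos
      rw [wallisRatio_zero]
      field_simp
      linear_combination Real.sq_sqrt one_sub_pos.le
    exact value ▸ hasSum_wallisRatio ht
  · have := succ_mul_wallisRatio_succ 0
    norm_num [h, wallisRatio_zero] at this ⊢
    exact this.symm

theorem hasSum_wallisRatio_div_succ (ht : |t| < 1) :
    HasSum (fun n : ℕ => wallisRatio n / (n + 1) * t ^ n) (2 / (1 + √(1 - t))) := by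
  have sqrt_pos : 0 < √(1 - t) := Real.sqrt_pos.2 (sub_pos.2 (lt_of_abs_lt ht))
  have value : 2 / (1 + √(1 - t)) = 2 * (1 / √(1 - t) - 1 / (√(1 - t) * (1 + √(1 - t)))) := by
    field_simp
    ring
  rw [value]
  refine (((hasSum_wallisRatio ht).sub (hasSum_wallisRatio_succ ht)).mul_left 2).congr_fun
    fun n => ?_
  rw [wallisRatio_div_succ]
  ring

/-- The logarithm of `2 / (1 + √(1 - t)) = ∑ wallisRatio n / (n + 1) * t ^ n`, which at `t = 4 * x`
is the generating function of the Catalan numbers. -/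
noncomputable def logCatalan (t : ℝ) : ℝ := log 2 - log (1 + √(1 - t))

theorem logCatalan_zero : logCatalan 0 = 0 := by norm_num [logCatalan]

theorem hasDerivAt_logCatalan (ht : t < 1) :
    HasDerivAt logCatalan (1 / (2 * √(1 - t) * (1 + √(1 - t)))) t := by
  have sqrt_pos : 0 < √(1 - t) := Real.sqrt_pos.2 (sub_pos.2 ht)
  have deriv_sqrt := ((hasDerivAt_id t).const_sub 1).sqrt (sub_pos.2 ht).ne'
  refine (((deriv_sqrt.const_add 1).log (by positivity)).const_sub (log 2)).congr_deriv ?_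
  simp only [id]
  field_simp

theorem hasSum_wallisRatio_div (ht : |t| < 1) :
    HasSum (fun n : ℕ => wallisRatio n / n * t ^ n) (2 * logCatalan t) := by
  refine hasSum_mul_pow_of_hasDerivAt (F := fun t => 2 * logCatalan t) (fun z hz => ?_)
    (fun z hz => ((hasDerivAt_logCatalan (lt_of_abs_lt hz)).const_mul 2).congr_deriv ?_) ?_ ht
    (F' := fun z => 1 / (√(1 - z) * (1 + √(1 - z))))
  · refine (hasSum_wallisRatio_succ hz).congr_fun fun n => ?_
    push_cast
    field_simp
  · field_simp
  · simp [logCatalan_zero]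

theorem succ_mul_wallisRatio_mul_harmonicGap_succ (n : ℕ) :
    (n + 1) * (wallisRatio (n + 1) * harmonicGap (n + 1)) =
      (n + 1 / 2) * (wallisRatio n * harmonicGap n) + 1 / 4 * (wallisRatio n / (n + 1)) := by
  rw [← mul_assoc, succ_mul_wallisRatio_succ, harmonicGap_succ]
  field_simp
  ring

theorem summable_succ_mul_wallisRatio_mul_harmonicGap_mul_pow (ht : |t| < 1) :
    Summable fun n : ℕ => (n + 1) * (wallisRatio (n + 1) * harmonicGap (n + 1)) * t ^ n := by
  refine summable_succ_mul_mul_pow_of_bounded (a := fun n => wallisRatio n * harmonicGap n)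
    (C := 1) (fun n => ?_) ht
  rw [norm_of_nonneg (mul_nonneg (wallisRatio_pos n).le (harmonicGap_nonneg n))]
  exact mul_le_one₀ (wallisRatio_le_one n) (harmonicGap_nonneg n) (harmonicGap_le_one n)

theorem hasSum_wallisRatio_mul_harmonicGap (ht : |t| < 1) :
    HasSum (fun n => wallisRatio n * harmonicGap n * t ^ n) (logCatalan t / √(1 - t)) := by
  have sqrt_pos {z : ℝ} (hz : |z| < 1) : 0 < √(1 - z) :=
    Real.sqrt_pos.2 (sub_pos.2 (lt_of_abs_lt hz))
  have sqrt_mul_tsum :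
      √(1 - t) * ∑' n, wallisRatio n * harmonicGap n * t ^ n = logCatalan t := by
    refine eq_of_hasDerivAt_eq_of_norm_lt
      (f := fun z => √(1 - z) * ∑' n, wallisRatio n * harmonicGap n * z ^ n) (fun z hz => ?_)
      (fun z hz => hasDerivAt_logCatalan (lt_of_abs_lt hz)) ?_ ht
    · have one_sub_pos : 0 < 1 - z := sub_pos.2 (lt_of_abs_lt hz)
      have deriv_tsum := hasDerivAt_tsum_mul_pow_of_recurrence
        (a := fun n => wallisRatio n * harmonicGap n)
        (b := fun n => 1 / 4 * (wallisRatio n / (n + 1)))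
        (fun w hw => summable_succ_mul_wallisRatio_mul_harmonicGap_mul_pow hw)
        succ_mul_wallisRatio_mul_harmonicGap_succ hz
        (((hasSum_wallisRatio_div_succ hz).mul_left (1 / 4)).congr_fun fun n => by ring)
      refine ((((hasDerivAt_id z).const_sub 1).sqrt one_sub_pos.ne').mul deriv_tsum).congr_deriv ?_
      have := sqrt_pos hz
      simp only [id, mul_div_left_comm √(1 - z), Real.sqrt_div_self]
      field_simp
      ring
    · rw [logCatalan_zero, tsum_eq_single 0 fun n hn => by simp [hn]]
      simp [harmonicGap_zero]
  rw [← sqrt_mul_tsum, mul_div_cancel_left₀ _ (sqrt_pos ht).ne']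
  exact (summable_mul_pow_of_summable_deriv (a := fun n => wallisRatio n * harmonicGap n)
    (summable_succ_mul_wallisRatio_mul_harmonicGap_mul_pow ht)).hasSum

theorem hasSum_succ_wallisRatio_mul_harmonicGap_sub (ht : |t| < 1) :
    HasSum (fun n : ℕ =>
        wallisRatio (n + 1) * (harmonicGap (n + 1) - 1 / (2 * (n + 1 : ℕ))) * t ^ n)
      (logCatalan t / (√(1 - t) * (1 + √(1 - t)))) := by
  have one_sub_pos : 0 < 1 - t := sub_pos.2 (lt_of_abs_lt ht)
  refine hasSum_succ_mul_pow (a := fun n => wallisRatio n * (harmonicGap n - 1 / (2 * n)))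
    ?_ fun h => ?_
  · have value : wallisRatio 0 * (harmonicGap 0 - 1 / (2 * (0 : ℕ))) +
        t * (logCatalan t / (√(1 - t) * (1 + √(1 - t)))) =
          logCatalan t / √(1 - t) - 1 / 2 * (2 * logCatalan t) := by
      have := Real.sqrt_pos.2 one_sub_pos
      simp only [harmonicGap_zero, CharP.cast_eq_zero, mul_zero, div_zero, sub_zero, zero_add]
      field_simp
      linear_combination logCatalan t * Real.sq_sqrt one_sub_pos.le
    rw [value]
    exact ((hasSum_wallisRatio_mul_harmonicGap ht).sub
      ((hasSum_wallisRatio_div ht).mul_left (1 / 2))).congr_fun fun n => by ring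
  · have := harmonicGap_succ 0
    norm_num [harmonicGap_zero] at this
    norm_num [h, logCatalan_zero, this]

theorem hasSum_wallisRatio_div_mul_harmonicGap_sub (ht : |t| < 1) :
    HasSum (fun n : ℕ => wallisRatio n / n * (harmonicGap n - 1 / (2 * n)) * t ^ n)
      (logCatalan t ^ 2) := by
  refine hasSum_mul_pow_of_hasDerivAt (F := fun t => logCatalan t ^ 2)
    (F' := fun z => logCatalan z / (√(1 - z) * (1 + √(1 - z)))) (fun z hz => ?_)
    (fun z hz => ((hasDerivAt_logCatalan (lt_of_abs_lt hz)).pow 2).congr_deriv ?_) ?_ ht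
  · refine (hasSum_succ_wallisRatio_mul_harmonicGap_sub hz).congr_fun fun n => ?_
    push_cast
    field_simp
  · field_simp
    ring
  · simp [logCatalan_zero]

theorem summable_wallisRatio_div_mul_harmonicGap_sub :
    Summable fun n : ℕ => wallisRatio n / n * (harmonicGap n - 1 / (2 * n)) := by
  refine .of_norm_bounded summable_wallisRatio_div fun n => ?_
  have half_inv_le : 1 / (2 * n : ℝ) ≤ 1 := by
    rcases n.eq_zero_or_pos with rfl | hn
    · simp
    · have : (1 : ℝ) ≤ n := Nat.one_le_cast.2 hn
      exact div_le_one_of_le₀ (by linarith) (by positivity)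
  have half_inv_nonneg : 0 ≤ 1 / (2 * n : ℝ) := by positivity
  rw [norm_mul, norm_of_nonneg (div_nonneg (wallisRatio_pos n).le n.cast_nonneg)]
  refine mul_le_of_le_one_right (div_nonneg (wallisRatio_pos n).le n.cast_nonneg) (abs_le.2 ?_)
  constructor <;> linarith [harmonicGap_nonneg n, harmonicGap_le_one n]

end GeneratingFunctions

section Arsinh

variable {x : ℝ}

theorem abs_neg_sq_lt_one (hx : |x| < 1) : |(-x ^ 2)| < 1 := by
  rwa [abs_neg, abs_pow, sq_lt_one_iff₀ (abs_nonneg x)]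

theorem summable_oddWallisRatio_succ_mul_pow {t : ℝ} (ht : |t| < 1) :
    Summable fun n => oddWallisRatio (n + 1) * t ^ n :=
  summable_mul_pow_of_summable_deriv (a := fun n => oddWallisRatio (n + 1)) <|
    summable_succ_mul_mul_pow_of_bounded (a := fun n => oddWallisRatio (n + 1))
      (fun n => norm_oddWallisRatio_le_one (n + 1)) ht

theorem summable_oddWallisRatio_mul_pow {t : ℝ} (ht : |t| < 1) :
    Summable fun n => oddWallisRatio n * t ^ n :=
  summable_mul_pow_of_summable_deriv <|
    summable_succ_mul_mul_pow_of_bounded norm_oddWallisRatio_le_one ht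

theorem tsum_oddWallisRatio_mul_pow {t : ℝ} (ht : |t| < 1) :
    ∑' n, oddWallisRatio n * t ^ n = 1 + t * ∑' n, oddWallisRatio (n + 1) * t ^ n := by
  rw [(summable_oddWallisRatio_mul_pow ht).tsum_eq_zero_add, ← tsum_mul_left, oddWallisRatio_zero,
    pow_zero, mul_one]
  exact congrArg (1 + ·) (tsum_congr fun n => by ring)

theorem succ_mul_oddWallisRatio_succ (n : ℕ) :
    (n + 1) * oddWallisRatio (n + 1) =
      (n + 1) * oddWallisRatio n + -(1 / 2) * oddWallisRatio (n + 1) := by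
  linear_combination oddWallisRatio_succ n / 2

theorem hasDerivAt_tsum_oddWallisRatio {t : ℝ} (ht : |t| < 1) :
    HasDerivAt (fun t => ∑' n, oddWallisRatio n * t ^ n)
      ((∑' n, oddWallisRatio n * t ^ n - (∑' n, oddWallisRatio (n + 1) * t ^ n) / 2) / (1 - t))
      t := by
  refine (hasDerivAt_tsum_mul_pow_of_recurrence
    (fun w hw => summable_succ_mul_mul_pow_of_bounded norm_oddWallisRatio_le_one hw)
    succ_mul_oddWallisRatio_succ ht
    (((summable_oddWallisRatio_succ_mul_pow ht).hasSum.mul_left (-(1 / 2))).congr_fun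
      fun n => by ring)).congr_deriv ?_
  ring

theorem hasDerivAt_comp_neg_sq {f : ℝ → ℝ} {f' : ℝ} (hf : HasDerivAt f f' (-x ^ 2)) :
    HasDerivAt (fun y => f (-y ^ 2)) (-2 * x * f') x :=
  (hf.comp x (hasDerivAt_pow 2 x).neg).congr_deriv (by push_cast; ring)

theorem hasDerivAt_sqrt_one_add_sq :
    HasDerivAt (fun y => √(1 + y ^ 2)) (x / √(1 + x ^ 2)) x := by
  refine (((hasDerivAt_pow 2 x).const_add 1).sqrt (by positivity)).congr_deriv ?_
  field_simp
  ring

theorem sqrt_mul_tsum_oddWallisRatio (hx : |x| < 1) :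
    √(1 + x ^ 2) * (x * ∑' n, oddWallisRatio n * (-x ^ 2) ^ n) = arsinh x := by
  refine eq_of_hasDerivAt_eq_of_norm_lt
    (f := fun y => √(1 + y ^ 2) * (y * ∑' n, oddWallisRatio n * (-y ^ 2) ^ n))
    (fun y hy => ?_) (fun y _ => hasDerivAt_arsinh y) (by simp) hx
  have neg_sq_lt_one := abs_neg_sq_lt_one hy
  refine (hasDerivAt_sqrt_one_add_sq.mul ((hasDerivAt_id y).mul
    (hasDerivAt_comp_neg_sq (hasDerivAt_tsum_oddWallisRatio neg_sq_lt_one)))).congr_deriv ?_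
  have head := tsum_oddWallisRatio_mul_pow neg_sq_lt_one
  have sq_sqrt : √(1 + y ^ 2) ^ 2 = 1 + y ^ 2 := Real.sq_sqrt (by positivity)
  simp only [id, Pi.mul_apply]
  generalize ∑' n, oddWallisRatio n * (-y ^ 2) ^ n = S at *
  generalize ∑' n, oddWallisRatio (n + 1) * (-y ^ 2) ^ n = T at *
  rw [sub_neg_eq_add]
  field_simp
  linear_combination (S - y ^ 2 * S + y ^ 2 * T) * sq_sqrt + (1 + y ^ 2) * head

theorem summable_succ_mul_one_div_sq_mul_wallisRatio_mul_pow {t : ℝ} (ht : |t| < 1) :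
    Summable fun n : ℕ =>
      ((n : ℝ) + 1) * (1 / (((n + 1 : ℕ) : ℝ) ^ 2 * wallisRatio (n + 1))) * t ^ n :=
  ((summable_oddWallisRatio_mul_pow ht).mul_left 2).congr fun n => by
    rw [succ_mul_one_div_sq_mul_wallisRatio_succ, mul_assoc]

theorem hasDerivAt_tsum_one_div_sq_mul_wallisRatio {t : ℝ} (ht : |t| < 1) :
    HasDerivAt (fun t => ∑' n : ℕ, 1 / ((n : ℝ) ^ 2 * wallisRatio n) * t ^ n)
      (2 * ∑' n, oddWallisRatio n * t ^ n) t := by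
  refine (hasDerivAt_tsum_mul_pow (a := fun n : ℕ => 1 / ((n : ℝ) ^ 2 * wallisRatio n))
    (fun w hw => summable_succ_mul_one_div_sq_mul_wallisRatio_mul_pow hw) ht).congr_deriv ?_
  rw [← tsum_mul_left]
  exact tsum_congr fun n => by rw [succ_mul_one_div_sq_mul_wallisRatio_succ, mul_assoc]

theorem hasSum_one_div_sq_mul_wallisRatio (hx : |x| < 1) :
    HasSum (fun n : ℕ => 1 / ((n : ℝ) ^ 2 * wallisRatio n) * (-x ^ 2) ^ n)
      (-2 * arsinh x ^ 2) := by
  have tsum_eq :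
      ∑' n : ℕ, 1 / ((n : ℝ) ^ 2 * wallisRatio n) * (-x ^ 2) ^ n = -2 * arsinh x ^ 2 := by
    refine eq_of_hasDerivAt_eq_of_norm_lt
      (f := fun y => ∑' n : ℕ, 1 / ((n : ℝ) ^ 2 * wallisRatio n) * (-y ^ 2) ^ n)
      (g := fun y => -2 * arsinh y ^ 2) (fun y hy => hasDerivAt_comp_neg_sq
        (hasDerivAt_tsum_one_div_sq_mul_wallisRatio (abs_neg_sq_lt_one hy)))
      (fun y hy => (((hasDerivAt_arsinh y).pow 2).const_mul (-2)).congr_deriv ?_) ?_ hx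
    · rw [← sqrt_mul_tsum_oddWallisRatio hy]
      field_simp
      ring
    · rw [tsum_eq_single 0 fun n hn => by simp [hn]]
      simp
  rw [← tsum_eq]
  exact (summable_mul_pow_of_summable_deriv
    (a := fun n : ℕ => 1 / ((n : ℝ) ^ 2 * wallisRatio n))
    (summable_succ_mul_one_div_sq_mul_wallisRatio_mul_pow (abs_neg_sq_lt_one hx))).hasSum

end Arsinh

theorem hasSum_neg_one_pow_mul {a : ℕ → ℝ} {F : ℝ → ℝ} (ha : Summable a)
    (hF : ContinuousAt F 1) (h : ∀ t ∈ Ioo (0 : ℝ) 1, HasSum (fun n => a n * (-t) ^ n) (F t)) :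
    HasSum (fun n => (-1) ^ n * a n) (F 1) := by
  have summable_alternating : Summable fun n => (-1) ^ n * a n :=
    .of_norm_bounded ha.abs fun n => by simp
  refine hasSum_of_hasSum_mul_pow summable_alternating hF.continuousWithinAt fun t ht =>
    (h t ht).congr_fun fun n => ?_
  rw [neg_pow]
  ring

theorem continuous_logCatalan : Continuous logCatalan :=
  continuous_const.sub (Continuous.log (by fun_prop) fun t => by positivity)

theorem abs_neg_lt_one_of_mem_Ioo {t : ℝ} (ht : t ∈ Ioo (0 : ℝ) 1) : |(-t)| < 1 := by
  rw [abs_neg, abs_of_pos ht.1]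
  exact ht.2

theorem hasSum_neg_one_pow_mul_wallisRatio_div :
    HasSum (fun n : ℕ => (-1) ^ n * (wallisRatio n / n)) (2 * logCatalan (-1)) :=
  hasSum_neg_one_pow_mul (F := fun t => 2 * logCatalan (-t)) summable_wallisRatio_div
    (continuous_const.mul (continuous_logCatalan.comp continuous_neg)).continuousAt
    fun _ ht => hasSum_wallisRatio_div (abs_neg_lt_one_of_mem_Ioo ht)

theorem hasSum_neg_one_pow_mul_wallisRatio_div_mul_harmonicGap_sub :
    HasSum (fun n : ℕ => (-1) ^ n * (wallisRatio n / n * (harmonicGap n - 1 / (2 * n))))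
      (logCatalan (-1) ^ 2) :=
  hasSum_neg_one_pow_mul (F := fun t => logCatalan (-t) ^ 2)
    summable_wallisRatio_div_mul_harmonicGap_sub
    ((continuous_logCatalan.comp continuous_neg).pow 2).continuousAt
    fun _ ht => hasSum_wallisRatio_div_mul_harmonicGap_sub (abs_neg_lt_one_of_mem_Ioo ht)

theorem hasSum_neg_one_pow_mul_one_div_sq_mul_wallisRatio :
    HasSum (fun n : ℕ => (-1) ^ n * (1 / ((n : ℝ) ^ 2 * wallisRatio n))) (-2 * arsinh 1 ^ 2) := by
  have sqrt_one : -2 * arsinh √1 ^ 2 = -2 * arsinh 1 ^ 2 := by rw [Real.sqrt_one]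
  rw [← sqrt_one]
  refine hasSum_neg_one_pow_mul (F := fun t => -2 * arsinh √t ^ 2)
    summable_one_div_sq_mul_wallisRatio
    (continuous_const.mul ((continuous_arsinh.comp Real.continuous_sqrt).pow 2)).continuousAt
    fun t ht => ?_
  have sqrt_lt_one : |√t| < 1 := by
    rw [abs_of_nonneg (Real.sqrt_nonneg t), Real.sqrt_lt' one_pos, one_pow]
    exact ht.2
  simpa only [Real.sq_sqrt ht.1.le] using hasSum_one_div_sq_mul_wallisRatio sqrt_lt_one

theorem hasSum_succ_of_zero {M : Type*} [AddCommGroup M] [TopologicalSpace M]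
    [IsTopologicalAddGroup M] {f : ℕ → M} {s : M} (h : HasSum f s) (h₀ : f 0 = 0) :
    HasSum (fun n => f (n + 1)) s := by
  simpa [h₀] using (hasSum_nat_add_iff' 1).2 h

theorem hasSum_alternating_four_pow_div_sq_mul_centralBinom :
    HasSum (fun n : ℕ =>
      (-1 : ℝ) ^ n * (4 : ℝ) ^ n / (((n : ℝ) + 1) ^ 2 * (Nat.centralBinom (n + 1) : ℝ)))
      (arsinh 1 ^ 2 / 2) := by
  have shifted := (hasSum_succ_of_zero hasSum_neg_one_pow_mul_one_div_sq_mul_wallisRatio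
    (by simp)).mul_left (-1 / 4)
  rw [show arsinh 1 ^ 2 / 2 = -1 / 4 * (-2 * arsinh 1 ^ 2) by ring]
  refine shifted.congr_fun fun n => ?_
  have : (0 : ℝ) < (n + 1).centralBinom := Nat.cast_pos.2 (n + 1).centralBinom_pos
  simp only [wallisRatio]
  push_cast
  field_simp
  ring

theorem hasSum_alternating_centralBinom_div :
    HasSum (fun n : ℕ =>
      (-1 : ℝ) ^ (n + 1) * (Nat.centralBinom (n + 1) : ℝ) / ((4 : ℝ) ^ (n + 1) * ((n : ℝ) + 1)))
      (2 * logCatalan (-1)) := by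
  refine (hasSum_succ_of_zero hasSum_neg_one_pow_mul_wallisRatio_div (by simp)).congr_fun
    fun n => ?_
  simp only [wallisRatio]
  push_cast
  field_simp

theorem hasSum_alternating_centralBinom_div_sq_mul_harmonic :
    HasSum (fun n : ℕ =>
      (-1 : ℝ) ^ n * (Nat.centralBinom (n + 1) : ℝ) / ((4 : ℝ) ^ (n + 1) * ((n : ℝ) + 1) ^ 2) *
        (2 + 2 * ((n : ℝ) + 1) * ((harmonic n : ℝ) - (harmonic (2 * n + 1) : ℝ))))
      (2 * logCatalan (-1) ^ 2) := by
  refine ((hasSum_succ_of_zero hasSum_neg_one_pow_mul_wallisRatio_div_mul_harmonicGap_sub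
    (by simp)).mul_left 2).congr_fun fun n => ?_
  simp only [wallisRatio, harmonicGap, show 2 * (n + 1) = 2 * n + 1 + 1 by ring,
    harmonic_succ (2 * n + 1), harmonic_succ n]
  push_cast
  field_simp
  ring

theorem arsinh_one : arsinh 1 = log 2 - logCatalan (-1) := by
  norm_num [arsinh, logCatalan]

/-- 2·∑_{n=1}^∞ (-1)^{n-1}·4^{n-1}/(n²·C(2n,n)) = log²2
- (∑_{n=1}^∞ (-1)ⁿ·C(2n,n)/(4ⁿ·n))·log 2
+ (1/2)·∑_{n=1}^∞ ((-1)^{n+1}·C(2n,n)/(4ⁿ·n²))·(2 + 2n(H_{n-1} - H_{2n-1})),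
where all three series converge. -/
theorem alternating_inverse_centralBinom_nsq_identity :
    Summable (fun n : ℕ =>
      (-1 : ℝ) ^ n * (4 : ℝ) ^ n / (((n : ℝ) + 1) ^ 2 * (Nat.centralBinom (n + 1) : ℝ))) ∧
    Summable (fun n : ℕ =>
      (-1 : ℝ) ^ (n + 1) * (Nat.centralBinom (n + 1) : ℝ) /
        ((4 : ℝ) ^ (n + 1) * ((n : ℝ) + 1))) ∧
    Summable (fun n : ℕ =>
      (-1 : ℝ) ^ n * (Nat.centralBinom (n + 1) : ℝ) /
          ((4 : ℝ) ^ (n + 1) * ((n : ℝ) + 1) ^ 2) *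
        (2 + 2 * ((n : ℝ) + 1) * ((harmonic n : ℝ) - (harmonic (2 * n + 1) : ℝ)))) ∧
    2 * ∑' n : ℕ,
        (-1 : ℝ) ^ n * (4 : ℝ) ^ n / (((n : ℝ) + 1) ^ 2 * (Nat.centralBinom (n + 1) : ℝ)) =
      Real.log 2 ^ 2
        - (∑' n : ℕ,
            (-1 : ℝ) ^ (n + 1) * (Nat.centralBinom (n + 1) : ℝ) /
              ((4 : ℝ) ^ (n + 1) * ((n : ℝ) + 1))) * Real.log 2
        + (1 / 2) * ∑' n : ℕ,
            (-1 : ℝ) ^ n * (Nat.centralBinom (n + 1) : ℝ) /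
                ((4 : ℝ) ^ (n + 1) * ((n : ℝ) + 1) ^ 2) *
              (2 + 2 * ((n : ℝ) + 1) * ((harmonic n : ℝ) - (harmonic (2 * n + 1) : ℝ))) := by
  have first := hasSum_alternating_four_pow_div_sq_mul_centralBinom
  have second := hasSum_alternating_centralBinom_div
  have third := hasSum_alternating_centralBinom_div_sq_mul_harmonic
  refine ⟨first.summable, second.summable, third.summable, ?_⟩
  rw [first.tsum_eq, second.tsum_eq, third.tsum_eq, arsinh_one]
  ring
end
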